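/- Under assumptions (A1), (A2), (A3), the estimator ζ̂_{a,n} = n^{-1} Σ_{s=1}^n Θ²(P̃_{X|Y_s,Z_s}, P̃_{X|Z_s}) a(Y_s,Z_s) converges in probability to ζ_a(X,Y|Z) as n → ∞; that is, ζ̂_{a,n} is a consistent estimator of the conditional ball divergence. -/

import Mathlib

open MeasureTheory ProbabilityTheory Filter
open scoped ENNReal NNReal Topology

noncomputable section

/-- `ℝ^d` with the Euclidean norm. -/
abbrev Euc (d : ℕ) : Type := EuclideanSpace ℝ (Fin d)

/-- The ball divergence `Θ²(P, Q)` between two Borel measures on `ℝ^d`: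
`∫∫ ((P - Q)(B̄(u, ‖v - u‖)))² [dP(u)dP(v) + dQ(u)dQ(v)]`. -/
def ballDiv {d : ℕ} (P Q : Measure (Euc d)) : ℝ :=
  (∫ u, ∫ v, ((P (Metric.closedBall u (dist v u))).toReal
      - (Q (Metric.closedBall u (dist v u))).toReal) ^ 2 ∂P ∂P)
  + (∫ u, ∫ v, ((P (Metric.closedBall u (dist v u))).toReal
      - (Q (Metric.closedBall u (dist v u))).toReal) ^ 2 ∂Q ∂Q)

/-- Assumption (A2): the kernel `K` is bounded, nonnegative, symmetric about zero, compactly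
supported, integrates (as `u ↦ K ‖u‖` on `ℝ^d`) to one and has a scalar second moment matrix. -/
def KernelAssumption (K : ℝ → ℝ) (d : ℕ) : Prop :=
  (∀ t, 0 ≤ K t) ∧ (∃ C : ℝ, ∀ t, K t ≤ C) ∧ (∀ t, K (-t) = K t) ∧
  (∃ R : ℝ, 0 < R ∧ ∀ t : ℝ, R < |t| → K t = 0) ∧
  (∫ u : Euc d, K ‖u‖) = 1 ∧
  (∃ τ : ℝ, 0 < τ ∧ ∀ i j : Fin d,
    (∫ u : Euc d, u i * u j * K ‖u‖) = if i = j then τ else 0)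

/-- Assumption (A3) on the bandwidth sequences `h₁, h₂`. -/
def BandwidthAssumption (dY dZ : ℕ) (h1 h2 : ℕ → ℝ) : Prop :=
  (∀ n, 0 < h1 n) ∧ (∀ n, 0 < h2 n) ∧
  Tendsto (fun n => h1 n ^ (dY + dZ) / h2 n ^ dZ) atTop (𝓝 0) ∧
  Tendsto (fun n : ℕ => (n : ℝ) * h1 n ^ (dY + dZ)) atTop atTop ∧
  Tendsto (fun n : ℕ => (n : ℝ) * h2 n ^ dZ) atTop atTop ∧
  Tendsto (fun n : ℕ => (n : ℝ) * h1 n ^ (dY + dZ + 4)) atTop (𝓝 0) ∧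
  Tendsto (fun n : ℕ => (n : ℝ) * h2 n ^ (dZ + 4)) atTop (𝓝 0)

/-- The remainder `R(x, y; u)` in the definition of a *nice* density, at step size `δ`. -/
def niceRem {α β : Type*} [NormedAddCommGroup β] [NormedSpace ℝ β]
    (f : α → β → ℝ) (δ : ℝ) (x : α) (y u : β) : ℝ :=
  (δ ^ 2)⁻¹ * (f x (y + δ • u) / f x y - 1 - δ * (fderiv ℝ (f x) y u / f x y))

/-- A joint density `f(x, y)` is *nice with respect to its second argument* if for every sequence
`δ_n → 0`, `sup_{‖u‖ = 1} limsup_n ∫ R_n(x, y; u)² f(x, y) dx` is uniformly bounded in `y`. -/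
def NiceWrt {α β : Type*} [MeasureSpace α] [NormedAddCommGroup β] [NormedSpace ℝ β]
    (f : α → β → ℝ) : Prop :=
  ∀ δ : ℕ → ℝ, (∀ n, δ n ≠ 0) → Tendsto δ atTop (𝓝 0) →
    ∃ C : ℝ, ∀ y u : β, ‖u‖ = 1 →
      Filter.limsup (fun n => ∫ x, (niceRem f (δ n) x y u) ^ 2 * f x y) atTop ≤ C

/-- The `(Y, Z)`-marginal density `p_{Y,Z}`. -/
def margYZ {dX dY dZ : ℕ} (p : Euc dX → Euc dY → Euc dZ → ℝ) (y : Euc dY) (z : Euc dZ) : ℝ :=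
  ∫ x, p x y z

/-- The `Z`-marginal density `p_Z`. -/
def margZ {dX dY dZ : ℕ} (p : Euc dX → Euc dY → Euc dZ → ℝ) (z : Euc dZ) : ℝ :=
  ∫ x, ∫ y, p x y z

/-- Assumption (A1): `p_{X,Z}` is nice with respect to `Z`, `p_{X,Y,Z}` is nice with respect to
`(Y,Z)` (equipped with the Euclidean/`L²` product norm), and `p_{X,Y,Z}` and all its marginals are
uniformly bounded. -/
def A1 {dX dY dZ : ℕ} (p : Euc dX → Euc dY → Euc dZ → ℝ) : Prop :=
  NiceWrt (fun (x : Euc dX) (z : Euc dZ) => ∫ y, p x y z) ∧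
  NiceWrt (fun (x : Euc dX) (w : WithLp 2 (Euc dY × Euc dZ)) =>
    p x (WithLp.equiv 2 (Euc dY × Euc dZ) w).1 (WithLp.equiv 2 (Euc dY × Euc dZ) w).2) ∧
  (∃ C : ℝ, (∀ x y z, p x y z ≤ C) ∧
    (∀ y z, (∫ x, p x y z) ≤ C) ∧ (∀ x z, (∫ y, p x y z) ≤ C) ∧ (∀ x y, (∫ z, p x y z) ≤ C) ∧
    (∀ x : Euc dX, (∫ y, ∫ z, p x y z) ≤ C) ∧ (∀ y : Euc dY, (∫ x, ∫ z, p x y z) ≤ C) ∧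
    (∀ z : Euc dZ, (∫ x, ∫ y, p x y z) ≤ C))

/-- The kernel weight `w_{(y', z')}(y, z) = K(‖(y,z) - (y',z')‖ / h₁)`, with the Euclidean norm on
the concatenated vector. -/
def wYZ {dY dZ : ℕ} (K : ℝ → ℝ) (h1 : ℝ) (y y' : Euc dY) (z z' : Euc dZ) : ℝ :=
  K (Real.sqrt (dist y y' ^ 2 + dist z z' ^ 2) / h1)

/-- The estimated conditional distribution `P̃_{X | Y = y, Z = z}` from `n` sample points. -/
def condEstYZ {dX dY dZ : ℕ} (K : ℝ → ℝ) (h1 : ℝ) (n : ℕ)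
    (Xs : ℕ → Euc dX) (Ys : ℕ → Euc dY) (Zs : ℕ → Euc dZ)
    (y : Euc dY) (z : Euc dZ) : Measure (Euc dX) :=
  (∑ i ∈ Finset.range n, ENNReal.ofReal (wYZ K h1 y (Ys i) z (Zs i)))⁻¹ •
    ∑ i ∈ Finset.range n, ENNReal.ofReal (wYZ K h1 y (Ys i) z (Zs i)) • Measure.dirac (Xs i)

/-- The estimated conditional distribution `P̃_{X | Z = z}` from `n` sample points. -/
def condEstZ {dX dZ : ℕ} (K : ℝ → ℝ) (h2 : ℝ) (n : ℕ)
    (Xs : ℕ → Euc dX) (Zs : ℕ → Euc dZ) (z : Euc dZ) : Measure (Euc dX) :=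
  (∑ i ∈ Finset.range n, ENNReal.ofReal (K (dist z (Zs i) / h2)))⁻¹ •
    ∑ i ∈ Finset.range n, ENNReal.ofReal (K (dist z (Zs i) / h2)) • Measure.dirac (Xs i)

/-- The regular conditional distribution `P_{X | Y = y, Z = z}`, given by the density
`x ↦ p(x,y,z) / p_{Y,Z}(y,z)`. -/
def condAtYZ {dX dY dZ : ℕ} (p : Euc dX → Euc dY → Euc dZ → ℝ)
    (y : Euc dY) (z : Euc dZ) : Measure (Euc dX) :=
  volume.withDensity fun x => ENNReal.ofReal (p x y z / margYZ p y z)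

/-- The regular conditional distribution `P_{X | Z = z}`, given by the density
`x ↦ p_{X,Z}(x,z) / p_Z(z)`. -/
def condAtZ {dX dY dZ : ℕ} (p : Euc dX → Euc dY → Euc dZ → ℝ) (z : Euc dZ) : Measure (Euc dX) :=
  volume.withDensity fun x => ENNReal.ofReal ((∫ y, p x y z) / margZ p z)

/-- `δ(x, y, z) = 1{‖x - z‖ ≤ ‖x - y‖}`. -/
def ballδ {d : ℕ} (x y z : Euc d) : ℝ := if dist x z ≤ dist x y then 1 else 0

/-- `η(x, y, z, z') = δ(x,y,z) δ(x,y,z')`. -/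
def ballη {d : ℕ} (x y z z' : Euc d) : ℝ := ballδ x y z * ballδ x y z'

/-- `φ_A`, one half of the ball divergence core function. -/
def ballφA {d : ℕ} (u1 u2 u3 u4 v3 v4 : Euc d) : ℝ :=
  ballη u1 u2 u3 u4 + ballη u1 u2 v3 v4 - ballη u1 u2 u3 v3 - ballη u1 u2 u4 v4

/-- The ball divergence core function `φ` of degree `(4, 4)`. -/
def ballφ {d : ℕ} (u v : Fin 4 → Euc d) : ℝ :=
  ballφA (u 0) (u 1) (u 2) (u 3) (v 2) (v 3) + ballφA (v 0) (v 1) (v 2) (v 3) (u 2) (u 3)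

/-- The symmetrized ball divergence core function `φ'`. -/
def ballφ' {d : ℕ} (u v : Fin 4 → Euc d) : ℝ :=
  ((Nat.factorial 4 * Nat.factorial 4 : ℕ) : ℝ)⁻¹ *
    ∑ τ : Equiv.Perm (Fin 4), ∑ σ : Equiv.Perm (Fin 4), ballφ (u ∘ τ) (v ∘ σ)


/-- The set of quadruples whose last two points lie in the ball around the first through the second. -/
def ballSet (d : ℕ) : Set ((Euc d × Euc d) × (Euc d × Euc d)) :=
  {q | dist q.2.1 q.1.1 ≤ dist q.1.2 q.1.1 ∧ dist q.2.2 q.1.1 ≤ dist q.1.2 q.1.1}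

lemma isClosed_ballSet (d : ℕ) : IsClosed (ballSet d) := by
  rw [ballSet, Set.ofPred_and]
  exact (isClosed_le (by fun_prop) (by fun_prop)).inter (isClosed_le (by fun_prop) (by fun_prop))

lemma measurable_ball_real {d : ℕ} (M : Measure (Euc d)) [IsFiniteMeasure M] :
    Measurable fun q : Euc d × Euc d => (M (Metric.closedBall q.1 (dist q.2 q.1))).toReal := by
  have hs : MeasurableSet {q : (Euc d × Euc d) × Euc d | dist q.2 q.1.1 ≤ dist q.1.2 q.1.1} :=
    (isClosed_le (by fun_prop) (by fun_prop)).measurableSet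
  exact (measurable_measure_prodMk_left (ν := M) hs).ennreal_toReal

lemma ballT_eq {d : ℕ} (R M M' : Measure (Euc d)) [IsFiniteMeasure R] [IsFiniteMeasure M]
    [IsFiniteMeasure M'] :
    (((R.prod R).prod (M.prod M')) (ballSet d)).toReal
      = ∫ q, (M (Metric.closedBall q.1 (dist q.2 q.1))).toReal
        * (M' (Metric.closedBall q.1 (dist q.2 q.1))).toReal ∂(R.prod R) := by
  rw [Measure.prod_apply (isClosed_ballSet d).measurableSet, ← integral_toReal]
  · congr 1
    ext q
    rw [← ENNReal.toReal_mul, ← Measure.prod_prod]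
    rfl
  · exact (measurable_measure_prodMk_left (isClosed_ballSet d).measurableSet).aemeasurable
  · exact ae_of_all _ fun q => measure_lt_top _ _

lemma integrable_ball_mul {d : ℕ} (R M M' : Measure (Euc d)) [IsFiniteMeasure R]
    [IsFiniteMeasure M] [IsFiniteMeasure M'] :
    Integrable (fun q : Euc d × Euc d => (M (Metric.closedBall q.1 (dist q.2 q.1))).toReal
        * (M' (Metric.closedBall q.1 (dist q.2 q.1))).toReal) (R.prod R) := by
  refine Integrable.of_bound ((measurable_ball_real M).mul
    (measurable_ball_real M')).aestronglyMeasurable ((M Set.univ).toReal * (M' Set.univ).toReal)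
    (ae_of_all _ fun q => ?_)
  rw [norm_mul, Real.norm_of_nonneg ENNReal.toReal_nonneg, Real.norm_of_nonneg
    ENNReal.toReal_nonneg]
  gcongr
  · exact measure_ne_top _ _
  · exact Set.subset_univ _
  · exact measure_ne_top _ _
  · exact Set.subset_univ _

/-- The trilinear ball functional of three measures. -/
def ballT {d : ℕ} (R M M' : Measure (Euc d)) : ℝ :=
  (((R.prod R).prod (M.prod M')) (ballSet d)).toReal

lemma ballHalf_eq {d : ℕ} (R P Q : Measure (Euc d)) [IsFiniteMeasure R] [IsFiniteMeasure P]
    [IsFiniteMeasure Q] :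
    (∫ u, ∫ v, ((P (Metric.closedBall u (dist v u))).toReal
      - (Q (Metric.closedBall u (dist v u))).toReal) ^ 2 ∂ R ∂ R)
    = ballT R P P - 2 * ballT R P Q + ballT R Q Q := by
  have i1 := integrable_ball_mul R P P
  have i2 := integrable_ball_mul R P Q
  have i3 := integrable_ball_mul R Q Q
  have h : Integrable (fun q : Euc d × Euc d => ((P (Metric.closedBall q.1 (dist q.2 q.1))).toReal
      - (Q (Metric.closedBall q.1 (dist q.2 q.1))).toReal) ^ 2) (R.prod R) := by
    refine ((i1.sub (i2.const_mul 2)).add i3).congr (ae_of_all _ fun q => ?_)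
    simp only [Pi.add_apply, Pi.sub_apply]
    ring
  rw [← integral_prod _ h, ballT, ballT, ballT, ballT_eq, ballT_eq, ballT_eq,
    ← integral_const_mul, ← integral_sub' i1 (i2.const_mul 2),
    ← integral_add' (i1.sub (i2.const_mul 2)) i3]
  congr 1
  ext q
  simp only [Pi.add_apply, Pi.sub_apply]
  ring

lemma ballDiv_eq {d : ℕ} (P Q : Measure (Euc d)) [IsFiniteMeasure P] [IsFiniteMeasure Q] :
    ballDiv P Q = (ballT P P P - 2 * ballT P P Q + ballT P Q Q)
      + (ballT Q P P - 2 * ballT Q P Q + ballT Q Q Q) := by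
  rw [ballDiv, ballHalf_eq, ballHalf_eq]

lemma ballT_nonneg {d : ℕ} (R M M' : Measure (Euc d)) : 0 ≤ ballT R M M' := ENNReal.toReal_nonneg

lemma ballT_le {d : ℕ} (R M M' : Measure (Euc d)) [IsFiniteMeasure R] [IsFiniteMeasure M]
    [IsFiniteMeasure M'] (hR : R Set.univ ≤ 1) (hM : M Set.univ ≤ 1) (hM' : M' Set.univ ≤ 1) :
    ballT R M M' ≤ 1 := by
  apply ENNReal.toReal_le_of_le_ofReal zero_le_one
  calc _ ≤ ((R.prod R).prod (M.prod M')) Set.univ := measure_mono (Set.subset_univ _)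
    _ = R Set.univ * R Set.univ * (M Set.univ * M' Set.univ) := by
      rw [← Set.univ_prod_univ, Measure.prod_prod, ← Set.univ_prod_univ, Measure.prod_prod,
        Measure.prod_prod]
    _ ≤ 1 * 1 * (1 * 1) := by gcongr
    _ = _ := by simp

lemma abs_ballDiv_le {d : ℕ} (P Q : Measure (Euc d)) (hP : P Set.univ ≤ 1) (hQ : Q Set.univ ≤ 1) :
    |ballDiv P Q| ≤ 8 := by
  have : IsFiniteMeasure P := ⟨hP.trans_lt ENNReal.one_lt_top⟩
  have : IsFiniteMeasure Q := ⟨hQ.trans_lt ENNReal.one_lt_top⟩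
  rw [ballDiv_eq, abs_le]
  constructor <;> linarith [ballT_nonneg P P P, ballT_nonneg P P Q, ballT_nonneg P Q Q,
    ballT_nonneg Q P P, ballT_nonneg Q P Q, ballT_nonneg Q Q Q, ballT_le P P P hP hP hP,
    ballT_le P P Q hP hP hQ, ballT_le P Q Q hP hQ hQ, ballT_le Q P P hQ hP hP,
    ballT_le Q P Q hQ hP hQ, ballT_le Q Q Q hQ hQ hQ]

lemma ballSet_frontier_null {d : ℕ} (R M M' : Measure (Euc d)) [IsFiniteMeasure R]
    [IsFiniteMeasure M] [IsFiniteMeasure M'] (hM : M ≪ volume) (hM' : M' ≪ volume) :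
    ((R.prod R).prod (M.prod M')) (frontier (ballSet d)) = 0 := by
  rcases subsingleton_or_nontrivial (Euc d) with hd | hd
  · have : ballSet d = Set.univ := by
      ext q
      simp only [ballSet, Set.mem_ofPred_eq, Set.mem_univ, iff_true]
      have : q.2.1 = q.1.1 := Subsingleton.elim _ _
      have h' : q.2.2 = q.1.1 := Subsingleton.elim _ _
      rw [this, h', dist_self]
      exact ⟨dist_nonneg, dist_nonneg⟩
    simp [this]
  have hsub : frontier (ballSet d) ⊆
      {q | dist q.2.1 q.1.1 = dist q.1.2 q.1.1} ∪ {q | dist q.2.2 q.1.1 = dist q.1.2 q.1.1} := by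
    intro q hq
    have h1 : q ∈ ballSet d := (isClosed_ballSet d).frontier_subset hq
    by_contra hcon
    simp only [Set.mem_union, Set.mem_ofPred_eq, not_or] at hcon
    have hopen : IsOpen {q : (Euc d × Euc d) × (Euc d × Euc d) |
        dist q.2.1 q.1.1 < dist q.1.2 q.1.1 ∧ dist q.2.2 q.1.1 < dist q.1.2 q.1.1} := by
      rw [Set.ofPred_and]
      exact (isOpen_lt (by fun_prop) (by fun_prop)).inter (isOpen_lt (by fun_prop) (by fun_prop))
    have hi : q ∈ interior (ballSet d) := by
      refine interior_maximal (fun q hq => ?_) hopen ?_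
      · exact ⟨hq.1.le, hq.2.le⟩
      exact ⟨lt_of_le_of_ne h1.1 hcon.1, lt_of_le_of_ne h1.2 hcon.2⟩
    exact hq.2 hi
  refine measure_mono_null hsub (measure_union_null ?_ ?_)
  · rw [Measure.measure_prod_null (isClosed_eq (by fun_prop) (by fun_prop)).measurableSet]
    refine ae_of_all _ fun q => ?_
    have : (Prod.mk q ⁻¹' {q : (Euc d × Euc d) × (Euc d × Euc d) |
        dist q.2.1 q.1.1 = dist q.1.2 q.1.1}) = Metric.sphere q.1 (dist q.2 q.1) ×ˢ Set.univ := by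
      ext x
      simp [← dist_eq_norm]
    change (M.prod M') _ = 0
    rw [this, Measure.prod_prod, hM (Measure.addHaar_sphere _ _ _)]
    simp
  · rw [Measure.measure_prod_null (isClosed_eq (by fun_prop) (by fun_prop)).measurableSet]
    refine ae_of_all _ fun q => ?_
    have : (Prod.mk q ⁻¹' {q : (Euc d × Euc d) × (Euc d × Euc d) |
        dist q.2.2 q.1.1 = dist q.1.2 q.1.1}) = Set.univ ×ˢ Metric.sphere q.1 (dist q.2 q.1) := by
      ext x
      simp [← dist_eq_norm]
    change (M.prod M') _ = 0
    rw [this, Measure.prod_prod, hM' (Measure.addHaar_sphere _ _ _)]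
    simp

lemma ballT_tendsto {d : ℕ} {R M M' : ProbabilityMeasure (Euc d)}
    {Rn Mn Mn' : ℕ → ProbabilityMeasure (Euc d)}
    (hR : Tendsto Rn atTop (𝓝 R)) (hM : Tendsto Mn atTop (𝓝 M)) (hM' : Tendsto Mn' atTop (𝓝 M'))
    (aM : (M : Measure (Euc d)) ≪ volume) (aM' : (M' : Measure (Euc d)) ≪ volume) :
    Tendsto (fun n => ballT (Rn n : Measure (Euc d)) (Mn n) (Mn' n)) atTop
      (𝓝 (ballT (R : Measure (Euc d)) M M')) := by
  have hc : ∀ {α β : Type} [TopologicalSpace α] [TopologicalSpace β] [SecondCountableTopology α]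
    [SecondCountableTopology β] [TopologicalSpace.PseudoMetrizableSpace α]
    [TopologicalSpace.PseudoMetrizableSpace β]
    [MeasurableSpace α] [MeasurableSpace β]
    [OpensMeasurableSpace α] [OpensMeasurableSpace β] {a : ProbabilityMeasure α}
    {b : ProbabilityMeasure β} {an : ℕ → ProbabilityMeasure α} {bn : ℕ → ProbabilityMeasure β},
    Tendsto an atTop (𝓝 a) → Tendsto bn atTop (𝓝 b) →
      Tendsto (fun n => (an n).prod (bn n)) atTop (𝓝 (a.prod b)) := by
    intro α β _ _ _ _ _ _ _ _ _ _ a b an bn ha hb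
    exact (ProbabilityMeasure.continuous_prod.tendsto (a, b)).comp (ha.prodMk_nhds hb)
  have key := ProbabilityMeasure.tendsto_measure_of_null_frontier_of_tendsto'
    (hc (hc hR hR) (hc hM hM')) (E := ballSet d)
    (ballSet_frontier_null (R : Measure (Euc d)) M M' aM aM')
  exact (ENNReal.tendsto_toReal (measure_ne_top _ _)).comp key

lemma ballDiv_tendsto_prob {d : ℕ} {P Q : ProbabilityMeasure (Euc d)}
    {Pn Qn : ℕ → ProbabilityMeasure (Euc d)}
    (hP : Tendsto Pn atTop (𝓝 P)) (hQ : Tendsto Qn atTop (𝓝 Q))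
    (aP : (P : Measure (Euc d)) ≪ volume) (aQ : (Q : Measure (Euc d)) ≪ volume) :
    Tendsto (fun n => ballDiv (Pn n : Measure (Euc d)) (Qn n)) atTop
      (𝓝 (ballDiv (P : Measure (Euc d)) Q)) := by
  simp_rw [ballDiv_eq]
  refine Tendsto.add (Tendsto.add (Tendsto.sub ?_ (Tendsto.const_mul 2 ?_)) ?_)
    (Tendsto.add (Tendsto.sub ?_ (Tendsto.const_mul 2 ?_)) ?_) <;>
  apply ballT_tendsto <;> assumption

/-- A countable π-system of open sets of `ℝ^d` forming a basis and containing `univ`. -/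
lemma exists_piBasis (d : ℕ) : ∃ S : Set (Set (Euc d)), S.Countable ∧ IsPiSystem S ∧
    (∀ s ∈ S, IsOpen s) ∧ Set.univ ∈ S ∧
    (∀ u : Set (Euc d), IsOpen u → ∀ x ∈ u, ∃ s ∈ S, s ∈ 𝓝 x ∧ s ⊆ u) := by
  obtain ⟨b, hbc, -, hb⟩ := TopologicalSpace.exists_countable_basis (Euc d)
  refine ⟨(fun f : Set (Set (Euc d)) => ⋂₀ f) '' {f | f.Finite ∧ f ⊆ b}, ?_, ?_, ?_, ?_, ?_⟩
  · exact (Set.countable_ofPred_finite_subset hbc).image _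
  · rintro _ ⟨f, ⟨hf, hfb⟩, rfl⟩ _ ⟨g, ⟨hg, hgb⟩, rfl⟩ -
    exact ⟨f ∪ g, ⟨hf.union hg, Set.union_subset hfb hgb⟩, Set.sInter_union _ _⟩
  · rintro _ ⟨f, ⟨hf, hfb⟩, rfl⟩
    exact hf.isOpen_sInter fun s hs => hb.isOpen (hfb hs)
  · exact ⟨∅, ⟨Set.finite_empty, Set.empty_subset _⟩, Set.sInter_empty⟩
  · intro u hu x hx
    obtain ⟨s, hs, hxs, hsu⟩ := hb.exists_subset_of_mem_open hx hu
    exact ⟨s, ⟨{s}, ⟨Set.finite_singleton s, Set.singleton_subset_iff.2 hs⟩, Set.sInter_singleton s⟩,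
      (hb.isOpen hs).mem_nhds hxs, hsu⟩

lemma ballDiv_tendsto {d : ℕ} {S : Set (Set (Euc d))} (hS : IsPiSystem S)
    (hSo : ∀ s ∈ S, IsOpen s)
    (hSb : ∀ u : Set (Euc d), IsOpen u → ∀ x ∈ u, ∃ s ∈ S, s ∈ 𝓝 x ∧ s ⊆ u)
    {P Q : Measure (Euc d)} [IsProbabilityMeasure P] [IsProbabilityMeasure Q]
    (aP : P ≪ volume) (aQ : Q ≪ volume)
    {Pn Qn : ℕ → Measure (Euc d)}
    (hPn : ∀ᶠ n in atTop, IsProbabilityMeasure (Pn n))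
    (hQn : ∀ᶠ n in atTop, IsProbabilityMeasure (Qn n))
    (hP : ∀ s ∈ S, Tendsto (fun n => Pn n s) atTop (𝓝 (P s)))
    (hQ : ∀ s ∈ S, Tendsto (fun n => Qn n s) atTop (𝓝 (Q s))) :
    Tendsto (fun n => ballDiv (Pn n) (Qn n)) atTop (𝓝 (ballDiv P Q)) := by
  classical
  have main : ∀ (P : Measure (Euc d)) [IsProbabilityMeasure P] (Pn : ℕ → Measure (Euc d)),
      (∀ᶠ n in atTop, IsProbabilityMeasure (Pn n)) →
      (∀ s ∈ S, Tendsto (fun n => Pn n s) atTop (𝓝 (P s))) →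
      ∃ Pn' : ℕ → ProbabilityMeasure (Euc d), (∀ᶠ n in atTop, (Pn' n : Measure (Euc d)) = Pn n) ∧
        Tendsto Pn' atTop (𝓝 ⟨P, inferInstance⟩) := by
    intro P _ Pn hPn hP
    let Pn' : ℕ → ProbabilityMeasure (Euc d) := fun n =>
      if h : IsProbabilityMeasure (Pn n) then ⟨Pn n, h⟩ else ⟨P, inferInstance⟩
    have heq : ∀ᶠ n in atTop, (Pn' n : Measure (Euc d)) = Pn n := by
      filter_upwards [hPn] with n hn
      simp [Pn', hn]
    refine ⟨Pn', heq, ?_⟩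
    refine hS.tendsto_probabilityMeasure_of_tendsto_of_mem (fun s hs => (hSo s hs).measurableSet)
      hSb fun s hs => ?_
    have h1 : Tendsto (fun n => (Pn' n : Measure (Euc d)) s) atTop (𝓝 (P s)) := by
      refine (hP s hs).congr' ?_
      filter_upwards [heq] with n hn
      rw [hn]
    exact (ENNReal.tendsto_toNNReal (measure_ne_top P _)).comp h1
  obtain ⟨Pn', e1, t1⟩ := main P Pn hPn hP
  obtain ⟨Qn', e2, t2⟩ := main Q Qn hQn hQ
  refine (ballDiv_tendsto_prob t1 t2 aP aQ).congr' ?_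
  filter_upwards [e1, e2] with n h1 h2
  rw [h1, h2]

lemma kernel_integral {W : Type} [NormedAddCommGroup W] [NormedSpace ℝ W] [FiniteDimensional ℝ W]
    [MeasurableSpace W] [BorelSpace W] (lam : Measure W) [lam.IsAddHaarMeasure]
    (k : W → ℝ) {h : ℝ} (hh : 0 < h) (w : W) :
    ∫ w', k (h⁻¹ • (w - w')) ∂lam = h ^ Module.finrank ℝ W * ∫ u, k u ∂lam := by
  rw [integral_sub_left_eq_self (fun u => k (h⁻¹ • u)) lam w,
    Measure.integral_comp_inv_smul_of_nonneg lam k hh.le, smul_eq_mul]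

lemma kernel_integrable {W : Type} [NormedAddCommGroup W] [NormedSpace ℝ W]
    [FiniteDimensional ℝ W]
    [MeasurableSpace W] [BorelSpace W] (lam : Measure W) [lam.IsAddHaarMeasure]
    {k : W → ℝ} (hk : Integrable k lam) {h : ℝ} (hh : 0 < h) (w : W) :
    Integrable (fun w' => k (h⁻¹ • (w - w'))) lam := by
  have h1 : Integrable (fun u => k (h⁻¹ • u)) lam := hk.comp_smul (inv_ne_zero hh.ne')
  exact h1.comp_sub_left w

lemma kernel_bias {W : Type} [NormedAddCommGroup W] [NormedSpace ℝ W] [FiniteDimensional ℝ W]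
    [MeasurableSpace W] [BorelSpace W] (lam : Measure W) [lam.IsAddHaarMeasure]
    {k : W → ℝ} (hk : Measurable k) {M R : ℝ} (hk0 : ∀ u, 0 ≤ k u) (hkM : ∀ u, k u ≤ M)
    (hR : 0 < R) (hkR : ∀ u, R < ‖u‖ → k u = 0) (hki : Integrable k lam)
    {m : W → ℝ} (hm : Integrable m lam)
    {h : ℕ → ℝ} (hh : ∀ n, 0 < h n) (hlim : Tendsto h atTop (𝓝 0)) :
    ∀ᵐ w ∂lam, Tendsto (fun n => (h n ^ Module.finrank ℝ W)⁻¹ *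
      ∫ w', k ((h n)⁻¹ • (w - w')) * m w' ∂lam) atTop (𝓝 ((∫ u, k u ∂lam) * m w)) := by
  filter_upwards [IsUnifLocDoublingMeasure.ae_tendsto_average_norm_sub lam hm.locallyIntegrable 1]
    with w hw
  have hδ : Tendsto (fun n => R * h n) atTop (𝓝[>] 0) := by
    refine tendsto_nhdsWithin_iff.2 ⟨by simpa using hlim.const_mul R, ?_⟩
    exact Eventually.of_forall fun n => mul_pos hR (hh n)
  have h0 := hw (fun _ : ℕ => w) (fun n => R * h n) hδ
    (Eventually.of_forall fun n => Metric.mem_closedBall_self (by have := hh n; positivity))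
  set d := Module.finrank ℝ W
  have hM : 0 ≤ M := (hk0 0).trans (hkM 0)
  set c1 : ℝ := M * (R ^ d * lam.real (Metric.ball (0 : W) 1))
  have h1 : Tendsto (fun n => c1 * ⨍ y in Metric.closedBall w (R * h n), ‖m y - m w‖ ∂lam)
      atTop (𝓝 0) := by simpa using h0.const_mul c1
  rw [tendsto_iff_norm_sub_tendsto_zero]
  refine squeeze_zero (fun _ => norm_nonneg _) (fun n => ?_) h1
  have hpos := pow_pos (hh n) d
  have hkint := kernel_integrable lam hki (hh n) w
  have hkmeas : Measurable fun w' => k ((h n)⁻¹ • (w - w')) := by fun_prop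
  have hkm : Integrable (fun w' => k ((h n)⁻¹ • (w - w')) * m w') lam := by
    refine hm.bdd_mul (c := M) hkmeas.aestronglyMeasurable (ae_of_all _ fun u => ?_)
    rw [Real.norm_of_nonneg (hk0 _)]
    exact hkM _
  have hdiff : (h n ^ d)⁻¹ * ∫ w', k ((h n)⁻¹ • (w - w')) * m w' ∂lam - (∫ u, k u ∂lam) * m w
      = (h n ^ d)⁻¹ * ∫ w', k ((h n)⁻¹ • (w - w')) * (m w' - m w) ∂lam := by
    have e1 : ∫ w', k ((h n)⁻¹ • (w - w')) * (m w' - m w) ∂lam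
        = ∫ w', k ((h n)⁻¹ • (w - w')) * m w' ∂lam - ∫ w', k ((h n)⁻¹ • (w - w')) * m w ∂lam := by
      rw [← integral_sub hkm (hkint.mul_const _)]
      congr 1
      ext u
      ring
    rw [e1, integral_mul_const, kernel_integral lam k (hh n) w]
    rw [mul_sub]
    congr 1
    rw [← mul_assoc, ← mul_assoc, inv_mul_cancel₀ hpos.ne', one_mul]
  rw [hdiff, norm_mul, Real.norm_of_nonneg (inv_nonneg.2 hpos.le)]
  have hmi : IntegrableOn (fun y => ‖m y - m w‖) (Metric.closedBall w (R * h n)) lam :=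
    (hm.integrableOn.sub (integrableOn_const (measure_closedBall_lt_top.ne))).norm
  have e2 : ‖∫ w', k ((h n)⁻¹ • (w - w')) * (m w' - m w) ∂lam‖
      ≤ M * ∫ y in Metric.closedBall w (R * h n), ‖m y - m w‖ ∂lam := by
    rw [← integral_const_mul, ← integral_indicator Metric.isClosed_closedBall.measurableSet]
    refine norm_integral_le_of_norm_le
      (IntegrableOn.integrable_indicator (hmi.const_mul M) Metric.isClosed_closedBall.measurableSet)
      (ae_of_all _ fun u => ?_)
    by_cases hu : u ∈ Metric.closedBall w (R * h n)
    · rw [Set.indicator_of_mem hu, norm_mul, Real.norm_of_nonneg (hk0 _)]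
      exact mul_le_mul_of_nonneg_right (hkM _) (norm_nonneg _)
    · rw [Set.indicator_of_notMem hu, hkR, zero_mul, norm_zero]
      rw [norm_smul, norm_inv, Real.norm_of_nonneg (hh n).le, ← dist_eq_norm, dist_comm]
      rw [Metric.mem_closedBall, not_le] at hu
      rw [inv_mul_eq_div, lt_div_iff₀ (hh n)]
      exact hu
  have hvol : lam.real (Metric.closedBall w (R * h n))
      = h n ^ d * (R ^ d * lam.real (Metric.ball (0 : W) 1)) := by
    rw [Measure.addHaar_real_closedBall lam w (mul_pos hR (hh n)).le, mul_pow]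
    ring
  have hb : 0 < lam.real (Metric.ball (0 : W) 1) := by
    exact ENNReal.toReal_pos (Metric.measure_ball_pos lam 0 one_pos).ne' measure_ball_lt_top.ne
  calc _ ≤ (h n ^ d)⁻¹ * (M * ∫ y in Metric.closedBall w (R * h n), ‖m y - m w‖ ∂lam) := by
        gcongr
    _ = _ := by
        rw [setAverage_eq, hvol, smul_eq_mul]
        have := pow_pos hR d
        simp only [c1]
        field_simp

lemma seq_lln {Ω E : Type} [MeasurableSpace Ω] [MeasurableSpace E] {μ : Measure Ω}
    [IsProbabilityMeasure μ] {V : ℕ → Ω → E} (hV : ∀ i, Measurable (V i)) (hind : iIndepFun V μ)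
    {ν : Measure E} (hlaw : ∀ i, μ.map (V i) = ν) (N : ℕ → ℕ) {g : ℕ → E → ℝ}
    (hg : ∀ j, Measurable (g j)) {M : ℝ} (hg0 : ∀ j x, 0 ≤ g j x) (hgM : ∀ j x, g j x ≤ M)
    {b : ℕ → ℝ} (hb : ∀ j, (2 : ℝ) ^ j ≤ b j) {D L : ℝ}
    (hD : ∀ j, N j * (∫ x, g j x ∂ν) ≤ D * b j)
    (hlim : Tendsto (fun j => N j * (∫ x, g j x ∂ν) / b j) atTop (𝓝 L)) :
    ∀ᵐ ω ∂μ, Tendsto (fun j => (∑ i : Fin (N j), g j (V i ω)) / b j) atTop (𝓝 L) := by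
  have hbpos : ∀ j, 0 < b j := fun j => lt_of_lt_of_le (by positivity) (hb j)
  have hmem : ∀ j i, MemLp (fun ω => g j (V i ω)) 2 μ := fun j i =>
    MemLp.of_bound ((hg j).comp (hV i)).aestronglyMeasurable M (ae_of_all _ fun ω => by
      rw [Real.norm_of_nonneg (hg0 _ _)]; exact hgM _ _)
  have hE : ∀ j i, ∫ ω, g j (V i ω) ∂μ = ∫ x, g j x ∂ν := fun j i => by
    rw [← hlaw i, integral_map (hV i).aemeasurable (hg j).aestronglyMeasurable]
  have hvar1 : ∀ j i, variance (fun ω => g j (V i ω)) μ ≤ M * ∫ x, g j x ∂ν := fun j i => by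
    refine (variance_le_expectation_sq (hmem j i).aestronglyMeasurable).trans ?_
    rw [← hE j i, ← integral_const_mul]
    refine integral_mono (hmem j i).integrable_sq (((hmem j i).integrable one_le_two).const_mul M)
      fun ω => ?_
    simp only [Pi.pow_apply, sq]
    exact mul_le_mul_of_nonneg_right (hgM _ _) (hg0 _ _)
  set S : ℕ → Ω → ℝ := fun j => ∑ i : Fin (N j), fun ω => g j (V i ω)
  have hSmem : ∀ j, MemLp (S j) 2 μ := fun j => memLp_finsetSum' _ fun i _ => hmem j i
  have hvar : ∀ j, variance (S j) μ ≤ M * (D * b j) := fun j => by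
    rw [IndepFun.variance_sum (X := fun (i : Fin (N j)) ω => g j (V i ω)) (fun i _ => hmem j i)]
    · have hM : 0 ≤ M := by
        obtain ⟨ω⟩ := nonempty_of_isProbabilityMeasure μ
        exact (hg0 j (V 0 ω)).trans (hgM j (V 0 ω))
      calc _ ≤ ∑ i : Fin (N j), M * ∫ x, g j x ∂ν := Finset.sum_le_sum fun i _ => hvar1 j i
        _ = M * (N j * ∫ x, g j x ∂ν) := by simp; ring
        _ ≤ _ := mul_le_mul_of_nonneg_left (hD j) hM
    · intro i _ i' _ hii
      exact (hind.indepFun (fun h => hii (Fin.ext h))).comp (hg j) (hg j)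
  have hES : ∀ j, ∫ ω, S j ω ∂μ = N j * ∫ x, g j x ∂ν := fun j => by
    simp only [S, Finset.sum_apply]
    rw [integral_finsetSum (f := fun (i : Fin (N j)) ω => g j (V i ω)) _ fun i _ => (hmem j i).integrable one_le_two]
    simp [hE]
  set Y : ℕ → Ω → ℝ≥0∞ := fun j ω =>
    ENNReal.ofReal (((S j ω - ∫ x, S j x ∂μ) / b j) ^ 2)
  have hYm : ∀ j, AEMeasurable (Y j) μ := fun j =>
    ((((hSmem j).aestronglyMeasurable.aemeasurable.sub_const _).div_const _).pow_const
      2).ennreal_ofReal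
  have hYint : ∀ j, ∫⁻ ω, Y j ω ∂μ ≤ ENNReal.ofReal (M * D * (1 / 2) ^ j) := fun j => by
    have hi : Integrable (fun ω => ((S j ω - ∫ x, S j x ∂μ) / b j) ^ 2) μ := by
      simp_rw [div_pow]
      exact (((hSmem j).sub (memLp_const _)).integrable_sq).div_const _
    rw [← ofReal_integral_eq_lintegral_ofReal hi (ae_of_all _ fun ω => sq_nonneg _)]
    apply ENNReal.ofReal_le_ofReal
    have hdp : ∀ ω, ((S j ω - ∫ x, S j x ∂μ) / b j) ^ 2 = (S j ω - ∫ x, S j x ∂μ) ^ 2 / b j ^ 2 :=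
      fun ω => div_pow _ _ _
    simp_rw [hdp]
    rw [integral_div, ← variance_eq_integral (hSmem j).aestronglyMeasurable.aemeasurable,
      div_le_iff₀ (pow_pos (hbpos j) 2)]
    refine (hvar j).trans ?_
    have hMD : 0 ≤ M * D := by
      have h1 := (variance_nonneg (S j) μ).trans (hvar j)
      rw [← mul_assoc] at h1
      exact nonneg_of_mul_nonneg_left h1 (hbpos j)
    have h2 : 1 ≤ (1 / 2 : ℝ) ^ j * b j := by
      calc (1 : ℝ) = (1 / 2 : ℝ) ^ j * 2 ^ j := by rw [← mul_pow]; norm_num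
        _ ≤ _ := by gcongr; exact hb j
    calc M * (D * b j) = M * D * b j * 1 := by ring
      _ ≤ M * D * b j * ((1 / 2 : ℝ) ^ j * b j) := by
        apply mul_le_mul_of_nonneg_left h2 (mul_nonneg hMD (hbpos j).le)
      _ = _ := by ring
  have hsum : ∫⁻ ω, ∑' j, Y j ω ∂μ ≠ ∞ := by
    rw [lintegral_tsum hYm]
    refine ne_top_of_le_ne_top ?_ (ENNReal.tsum_le_tsum hYint)
    have : Summable fun j : ℕ => M * D * (1 / 2 : ℝ) ^ j :=
      (summable_geometric_of_lt_one (by norm_num) (by norm_num)).mul_left _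
    exact this.tsum_ofReal_ne_top
  have hae := ae_lt_top' (AEMeasurable.tsum hYm) hsum
  filter_upwards [hae] with ω hω
  have h1 := ENNReal.tendsto_atTop_zero_of_tsum_ne_top hω.ne
  have h2 : Tendsto (fun j => ((S j ω - ∫ x, S j x ∂μ) / b j) ^ 2) atTop (𝓝 0) := by
    have := (ENNReal.tendsto_toReal ENNReal.zero_ne_top).comp h1
    refine this.congr fun j => ?_
    simp only [Function.comp, Y]
    exact ENNReal.toReal_ofReal (sq_nonneg _)
  have h3 : Tendsto (fun j => (S j ω - ∫ x, S j x ∂μ) / b j) atTop (𝓝 0) := by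
    rw [tendsto_zero_iff_abs_tendsto_zero]
    have := h2.sqrt
    simp only [Real.sqrt_sq_eq_abs, Real.sqrt_zero] at this
    exact this
  have h4 := h3.add hlim
  rw [zero_add] at h4
  refine h4.congr fun j => ?_
  rw [hES]
  simp only [S, Finset.sum_apply]
  ring

/-- Normalized weighted empirical measure with one distinguished atom. -/
def wMeas {X : Type} [MeasurableSpace X] {n : ℕ} (k0 : ℝ) (x : X) (c : Fin n → ℝ)
    (xs : Fin n → X) : Measure X :=
  (ENNReal.ofReal k0 + ∑ i, ENNReal.ofReal (c i))⁻¹ •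
    (ENNReal.ofReal k0 • Measure.dirac x + ∑ i, ENNReal.ofReal (c i) • Measure.dirac (xs i))

lemma wMeas_univ_le {X : Type} [MeasurableSpace X] {n : ℕ} (k0 : ℝ) (x : X) (c : Fin n → ℝ)
    (xs : Fin n → X) : wMeas k0 x c xs Set.univ ≤ 1 := by
  simp only [wMeas, Measure.smul_apply, Measure.add_apply, Measure.coe_finset_sum,
    Finset.sum_apply, smul_eq_mul, measure_univ, mul_one]
  exact ENNReal.inv_mul_le_one _

lemma wMeas_apply {X : Type} [MeasurableSpace X] {n : ℕ} {k0 : ℝ} (hk0 : 0 ≤ k0) (x : X)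
    {c : Fin n → ℝ} (hc : ∀ i, 0 ≤ c i) (xs : Fin n → X) (hpos : 0 < k0 + ∑ i, c i)
    {A : Set X} (hA : MeasurableSet A) :
    wMeas k0 x c xs A = ENNReal.ofReal
      ((k0 * A.indicator 1 x + ∑ i, c i * A.indicator 1 (xs i)) / (k0 + ∑ i, c i)) := by
  have hind : ∀ y : X, 0 ≤ A.indicator (1 : X → ℝ) y := fun y =>
    Set.indicator_nonneg (fun _ _ => zero_le_one) y
  have hind2 : ∀ y : X, A.indicator (1 : X → ℝ≥0∞) y = ENNReal.ofReal (A.indicator 1 y) := by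
    intro y
    by_cases hy : y ∈ A <;> simp [hy]
  simp only [wMeas, Measure.smul_apply, Measure.add_apply, Measure.coe_finset_sum,
    Finset.sum_apply, smul_eq_mul, Measure.dirac_apply' _ hA]
  have e1 : ENNReal.ofReal k0 + ∑ i, ENNReal.ofReal (c i) = ENNReal.ofReal (k0 + ∑ i, c i) := by
    rw [ENNReal.ofReal_add hk0 (Finset.sum_nonneg fun i _ => hc i),
      ENNReal.ofReal_sum_of_nonneg fun i _ => hc i]
  have e2 : ENNReal.ofReal k0 * A.indicator 1 x + ∑ i, ENNReal.ofReal (c i) * A.indicator 1 (xs i)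
      = ENNReal.ofReal (k0 * A.indicator 1 x + ∑ i, c i * A.indicator 1 (xs i)) := by
    rw [ENNReal.ofReal_add (mul_nonneg hk0 (hind _))
      (Finset.sum_nonneg fun i _ => mul_nonneg (hc i) (hind _)),
      ENNReal.ofReal_sum_of_nonneg fun i _ => mul_nonneg (hc i) (hind _)]
    simp_rw [hind2]
    rw [ENNReal.ofReal_mul hk0]
    simp_rw [fun i => ENNReal.ofReal_mul (q := A.indicator 1 (xs i)) (hc i)]
  rw [e1, e2, ENNReal.ofReal_div_of_pos hpos, mul_comm, ENNReal.div_eq_inv_mul, mul_comm]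

lemma est_tendsto {Ω E X W : Type} [MeasurableSpace Ω] [MeasurableSpace E] [MeasurableSpace X]
    [NormedAddCommGroup W] [NormedSpace ℝ W] [FiniteDimensional ℝ W]
    [MeasurableSpace W] [BorelSpace W] (lam : Measure W) [lam.IsAddHaarMeasure]
    {k : W → ℝ} (hk : Measurable k) {M R : ℝ} (hk0 : ∀ u, 0 ≤ k u) (hkM : ∀ u, k u ≤ M)
    (hR : 0 < R) (hkR : ∀ u, R < ‖u‖ → k u = 0) (hki : Integrable k lam)
    (hkpos : 0 < ∫ u, k u ∂lam)
    {h : ℕ → ℝ} (hh : ∀ n, 0 < h n) (hlim : Tendsto h atTop (𝓝 0))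
    {μ : Measure Ω}
    [IsProbabilityMeasure μ] {V : ℕ → Ω → E} (hV : ∀ i, Measurable (V i)) (hind : iIndepFun V μ)
    {ν : Measure E} (hlaw : ∀ i, μ.map (V i) = ν)
    {fX : E → X} {fW : E → W} (hfX : Measurable fX) (hfW : Measurable fW)
    {S : Set (Set X)} (hSc : S.Countable) (hSm : ∀ A ∈ S, MeasurableSet A) (hSu : Set.univ ∈ S)
    {m : Set X → W → ℝ} (hm : ∀ A ∈ S, Integrable (m A) lam) {C : ℝ}
    (hmC : ∀ A ∈ S, ∀ᵐ w ∂lam, m A w ≤ C)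
    (hmν : ∀ A ∈ S, ∀ f : W → ℝ, Measurable f → (∃ B, ∀ w, |f w| ≤ B) →
      ∫ v, f (fW v) * A.indicator 1 (fX v) ∂ν = ∫ w, f w * m A w ∂lam) :
    ∀ᵐ w ∂lam, 0 < m Set.univ w → ∀ (k0 : ℝ) (x : X), 0 ≤ k0 → ∀ N : ℕ → ℕ,
      Tendsto N atTop atTop →
      (∀ j, (2 : ℝ) ^ j ≤ N j * h (N j) ^ Module.finrank ℝ W) →
      ∀ᵐ ω ∂μ,
        (∀ᶠ j in atTop, IsProbabilityMeasure
          (wMeas k0 x (fun i : Fin (N j) => k ((h (N j))⁻¹ • (w - fW (V i ω))))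
          (fun i => fX (V i ω)))) ∧
        ∀ A ∈ S, Tendsto (fun j =>
          wMeas k0 x (fun i : Fin (N j) => k ((h (N j))⁻¹ • (w - fW (V i ω))))
            (fun i => fX (V i ω)) A) atTop (𝓝 (ENNReal.ofReal (m A w / m Set.univ w))) := by
  have hbias : ∀ᵐ w ∂lam, ∀ A ∈ S, Tendsto (fun n => (h n ^ Module.finrank ℝ W)⁻¹ *
      ∫ w', k ((h n)⁻¹ • (w - w')) * m A w' ∂lam) atTop (𝓝 ((∫ u, k u ∂lam) * m A w)) := by
    rw [ae_ball_iff hSc]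
    intro A hA
    exact kernel_bias lam hk hk0 hkM hR hkR hki (hm A hA) hh hlim
  set d := Module.finrank ℝ W
  set c := ∫ u, k u ∂lam
  filter_upwards [hbias] with w hw hwpos k0 x hk00 N hN hNb
  have hM : 0 ≤ M := (hk0 0).trans (hkM 0)
  have hS : ∀ᵐ ω ∂μ, ∀ A ∈ S, Tendsto (fun j => (∑ i : Fin (N j),
      k ((h (N j))⁻¹ • (w - fW (V i ω))) * A.indicator (1 : X → ℝ) (fX (V i ω)))
        / (N j * h (N j) ^ d)) atTop (𝓝 (c * m A w)) := by
    rw [ae_ball_iff hSc]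
    intro A hA
    have hi0 : ∀ y, 0 ≤ A.indicator (1 : X → ℝ) y := fun y =>
      Set.indicator_nonneg (fun _ _ => zero_le_one) y
    have hi1 : ∀ y, A.indicator (1 : X → ℝ) y ≤ 1 := fun y => by
      by_cases hy : y ∈ A <;> simp [hy]
    have hint : ∀ n, ∫ v, k ((h n)⁻¹ • (w - fW v)) * A.indicator (1 : X → ℝ) (fX v) ∂ν
        = ∫ w', k ((h n)⁻¹ • (w - w')) * m A w' ∂lam := fun n =>
      hmν A hA (fun w' => k ((h n)⁻¹ • (w - w'))) (by fun_prop)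
        ⟨M, fun u => by rw [abs_of_nonneg (hk0 _)]; exact hkM _⟩
    have hNpos : ∀ j, 0 < (N j : ℝ) := fun j => by
      have h1 : (0 : ℝ) < N j * h (N j) ^ d := lt_of_lt_of_le (by positivity) (hNb j)
      exact pos_of_mul_pos_left h1 (pow_pos (hh _) _).le
    refine seq_lln hV hind hlaw N (M := M) (D := C * c)
      (g := fun j v => k ((h (N j))⁻¹ • (w - fW v)) * A.indicator (1 : X → ℝ) (fX v))
      (fun j => ?_) (fun j v => mul_nonneg (hk0 _) (hi0 _)) (fun j v => ?_) hNb (fun j => ?_) ?_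
    · refine Measurable.mul (by fun_prop) ?_
      exact (measurable_one.indicator (hSm A hA)).comp hfX
    · exact (mul_le_mul (hkM _) (hi1 _) (hi0 _) hM).trans (mul_one M).le
    · simp only [hint]
      have : ∫ w', k ((h (N j))⁻¹ • (w - w')) * m A w' ∂lam ≤ h (N j) ^ d * c * C := by
        rw [← kernel_integral lam k (hh (N j)) w, ← integral_mul_const]
        refine integral_mono_ae ?_ ((kernel_integrable lam hki (hh (N j)) w).mul_const C) ?_
        · refine (hm A hA).bdd_mul (c := M) (Measurable.aestronglyMeasurable (by fun_prop))
            (ae_of_all _ fun u => ?_)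
          rw [Real.norm_of_nonneg (hk0 _)]
          exact hkM _
        · filter_upwards [hmC A hA] with u hu
          exact mul_le_mul_of_nonneg_left hu (hk0 _)
      calc _ ≤ (N j : ℝ) * (h (N j) ^ d * c * C) := mul_le_mul_of_nonneg_left this (hNpos j).le
        _ = _ := by ring
    · refine ((hw A hA).comp hN).congr fun j => ?_
      simp only [hint, Function.comp]
      have := hNpos j
      have := pow_pos (hh (N j)) d
      rw [mul_div_mul_left _ _ (hNpos j).ne', inv_mul_eq_div]
  have hinv : Tendsto (fun j => (N j * h (N j) ^ d : ℝ)⁻¹) atTop (𝓝 0) := by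
    refine tendsto_inv_atTop_zero.comp ?_
    exact tendsto_atTop_mono hNb (tendsto_pow_atTop_atTop_of_one_lt one_lt_two)
  filter_upwards [hS] with ω hω
  have hnum : ∀ A ∈ S, Tendsto (fun j => (k0 * A.indicator (1 : X → ℝ) x + ∑ i : Fin (N j),
      k ((h (N j))⁻¹ • (w - fW (V i ω))) * A.indicator (1 : X → ℝ) (fX (V i ω)))
        / (N j * h (N j) ^ d)) atTop (𝓝 (c * m A w)) := by
    intro A hA
    have h1 := (hinv.const_mul (k0 * A.indicator (1 : X → ℝ) x)).add (hω A hA)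
    rw [mul_zero, zero_add] at h1
    refine h1.congr fun j => ?_
    rw [add_div, div_eq_mul_inv (k0 * _)]
  have hden : Tendsto (fun j => (k0 + ∑ i : Fin (N j), k ((h (N j))⁻¹ • (w - fW (V i ω))))
        / (N j * h (N j) ^ d)) atTop (𝓝 (c * m Set.univ w)) := by
    simpa using hnum Set.univ hSu
  have hcm : 0 < c * m Set.univ w := mul_pos hkpos hwpos
  have hev : ∀ᶠ j in atTop, 0 < k0 + ∑ i : Fin (N j), k ((h (N j))⁻¹ • (w - fW (V i ω))) := by
    filter_upwards [hden.eventually (lt_mem_nhds hcm)] with j hj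
    have h1 : (0 : ℝ) < N j * h (N j) ^ d := lt_of_lt_of_le (by positivity) (hNb j)
    exact (div_pos_iff_of_pos_right h1).1 hj
  constructor
  · filter_upwards [hev] with j hj
    constructor
    rw [wMeas_apply hk00 x (fun i => hk0 _) _ hj MeasurableSet.univ]
    simp [div_self hj.ne']
  · intro A hA
    have h1 := (hnum A hA).div hden hcm.ne'
    rw [mul_div_mul_left _ _ hkpos.ne'] at h1
    refine (ENNReal.tendsto_ofReal h1).congr' ?_
    filter_upwards [hev] with j hj
    rw [wMeas_apply hk00 x (fun i => hk0 _) _ hj (hSm A hA)]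
    have h1 : (0 : ℝ) < N j * h (N j) ^ d := lt_of_lt_of_le (by positivity) (hNb j)
    simp only [Pi.div_apply]
    rw [div_div_div_cancel_right₀ h1.ne']

lemma exists_meas_kernel {W : Type} [NormedAddCommGroup W] [MeasurableSpace W] [BorelSpace W]
    (lam : Measure W) {κ : W → ℝ} {M R : ℝ} (h0 : ∀ u, 0 ≤ κ u) (hM : ∀ u, κ u ≤ M)
    (hR : ∀ u, R < ‖u‖ → κ u = 0) (hint : ∫ u, κ u ∂lam = 1) :
    ∃ k : W → ℝ, Measurable k ∧ (∀ u, 0 ≤ k u) ∧ (∀ u, k u ≤ M) ∧ (∀ u, R < ‖u‖ → k u = 0) ∧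
      Integrable k lam ∧ 0 < ∫ u, k u ∂lam ∧ k =ᵐ[lam] κ ∧ k 0 = κ 0 := by
  classical
  have hi : Integrable κ lam := by
    by_contra h
    rw [integral_undef h] at hint
    norm_num at hint
  have hM0 : 0 ≤ M := (h0 0).trans (hM 0)
  set g := hi.1.aemeasurable.mk κ with hg
  have hgm : Measurable g := hi.1.aemeasurable.measurable_mk
  have hge : κ =ᵐ[lam] g := hi.1.aemeasurable.ae_eq_mk
  set k : W → ℝ := fun u => if u = 0 then κ 0 else if ‖u‖ ≤ R then max 0 (min M (g u)) else 0 with hk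
  have hke : k =ᵐ[lam] κ := by
    filter_upwards [hge] with u hu
    simp only [hk]
    split_ifs with h1 h2
    · rw [h1]
    · rw [← hu, min_eq_right (hM u), max_eq_right (h0 u)]
    · rw [hR u (not_le.1 h2)]
  refine ⟨k, ?_, ?_, ?_, ?_, (integrable_congr hke).2 hi, ?_, hke, by simp [hk]⟩
  · refine Measurable.ite (measurableSet_singleton 0) measurable_const ?_
    refine Measurable.ite (measurableSet_le measurable_norm measurable_const) ?_ measurable_const
    exact measurable_const.max (measurable_const.min hgm)
  · intro u; simp only [hk]; split_ifs <;> simp [h0]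
  · intro u; simp only [hk]; split_ifs <;> simp [hM, hM0]
  · intro u hu; simp only [hk]; split_ifs with h1 h2
    · rw [← h1]; exact hR u hu
    · exact absurd hu (not_lt.2 h2)
    · rfl
  · rw [integral_congr_ae hke, hint]; norm_num

lemma ae_diff_of_indep {Ω W : Type} [MeasurableSpace Ω] [NormedAddCommGroup W] [NormedSpace ℝ W]
    [FiniteDimensional ℝ W] [MeasurableSpace W] [BorelSpace W] (lam : Measure W)
    [lam.IsAddHaarMeasure] {μ : Measure Ω} [IsProbabilityMeasure μ] {U1 U2 : Ω → W}
    (hU1 : Measurable U1) (hU2 : Measurable U2) (hind : IndepFun U1 U2 μ)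
    (hc1 : μ.map U1 ≪ lam) (hc2 : μ.map U2 ≪ lam) {q : W → Prop} (hq : ∀ᵐ u ∂lam, q u)
    {c : ℝ} (hc : c ≠ 0) : ∀ᵐ ω ∂μ, q (c • (U1 ω - U2 ω)) := by
  have : IsProbabilityMeasure (μ.map U1) := Measure.isProbabilityMeasure_map hU1.aemeasurable
  have : IsProbabilityMeasure (μ.map U2) := Measure.isProbabilityMeasure_map hU2.aemeasurable
  have hpair : μ.map (fun ω => (U1 ω, U2 ω)) = (μ.map U1).prod (μ.map U2) :=
    (indepFun_iff_map_prod_eq_prod_map_map hU1.aemeasurable hU2.aemeasurable).1 hind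
  have hcq : ∀ᵐ u ∂lam, q (c • u) := by
    have : Measure.QuasiMeasurePreserving (fun u : W => c • u) lam lam := by
      refine ⟨measurable_const_smul c, ?_⟩
      rw [Measure.map_addHaar_smul lam hc]
      exact Measure.smul_absolutelyContinuous
    exact this.ae hq
  obtain ⟨N, hN, hNm, hN0⟩ := exists_measurable_superset_of_null (show lam {u | ¬ q (c • u)} = 0 from hcq)
  have key : ∀ᵐ v ∂((μ.map U1).prod (μ.map U2)), v.1 - v.2 ∉ N := by
    have hac : (μ.map U1).prod (μ.map U2) ≪ lam.prod lam := hc1.prod hc2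
    suffices hsuf : ∀ᵐ v ∂(lam.prod lam), v.1 - v.2 ∉ N from hac.ae_le hsuf
    have hms : MeasurableSet {v : W × W | v.1 - v.2 ∈ N} :=
      (measurable_fst.sub measurable_snd) hNm
    have : lam.prod lam {v : W × W | v.1 - v.2 ∈ N} = 0 := by
      rw [Measure.measure_prod_null hms]
      refine Eventually.of_forall fun x => ?_
      exact (quasiMeasurePreserving_sub_left lam x).preimage_null hN0
    rw [ae_iff]
    simpa using this
  rw [← hpair] at key
  have := ae_of_ae_map (hU1.prodMk hU2).aemeasurable key
  filter_upwards [this] with ω hω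
  by_contra h
  exact hω (hN h)

lemma integral_euc_add (dY dZ : ℕ) (K : ℝ → ℝ) :
    ∫ u : Euc dY × Euc dZ, K (Real.sqrt (‖u.1‖ ^ 2 + ‖u.2‖ ^ 2)) = ∫ u : Euc (dY + dZ), K ‖u‖ := by
  let e1 : Euc (dY + dZ) ≃ₗᵢ[ℝ] EuclideanSpace ℝ (Fin dY ⊕ Fin dZ) :=
    LinearIsometryEquiv.piLpCongrLeft 2 ℝ ℝ finSumFinEquiv.symm
  let e2 : EuclideanSpace ℝ (Fin dY ⊕ Fin dZ) ≃ₗᵢ[ℝ] WithLp 2 (Euc dY × Euc dZ) :=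
    PiLp.sumPiLpEquivProdLpPiLp (p := 2) (𝕜 := ℝ) (α := fun _ : Fin dY ⊕ Fin dZ => ℝ) 
  have h1 := (e1.trans e2).measurePreserving
  have h2 := (WithLp.volume_preserving_ofLp (Euc dY) (Euc dZ))
  rw [← h2.integral_comp (MeasurableEquiv.toLp 2 (Euc dY × Euc dZ)).symm.measurableEmbedding,
    ← h1.integral_comp (e1.trans e2).toHomeomorph.measurableEmbedding]
  congr 1
  ext u
  rw [← (e1.trans e2).norm_map u, WithLp.prod_norm_eq_of_L2]
  rfl

lemma bandwidth_tendsto_zero {d : ℕ} {h : ℕ → ℝ} (hh : ∀ n, 0 < h n)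
    (h1 : Tendsto (fun n : ℕ => (n : ℝ) * h n ^ d) atTop atTop)
    (h2 : Tendsto (fun n : ℕ => (n : ℝ) * h n ^ (d + 4)) atTop (𝓝 0)) :
    Tendsto h atTop (𝓝 0) := by
  have h4 : Tendsto (fun n => h n ^ 4) atTop (𝓝 0) := by
    have := h2.div_atTop h1
    refine this.congr' ?_
    filter_upwards [eventually_gt_atTop 0] with n hn
    have : (0 : ℝ) < n := by exact_mod_cast hn
    have := hh n
    rw [pow_add]
    field_simp
  have := h4.sqrt.sqrt
  simp only [Real.sqrt_zero] at this
  refine this.congr fun n => ?_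
  rw [show h n ^ 4 = (h n ^ 2) ^ 2 by ring, Real.sqrt_sq (by positivity), Real.sqrt_sq (hh n).le]

lemma bandwidth_shift {d : ℕ} {h : ℕ → ℝ} (hh : ∀ n, 0 < h n)
    (h1 : Tendsto (fun n : ℕ => (n : ℝ) * h n ^ d) atTop atTop) :
    Tendsto (fun n : ℕ => (n : ℝ) * h (n + 1) ^ d) atTop atTop := by
  have := ((tendsto_add_atTop_iff_nat 1).2 h1).const_mul_atTop (show (0 : ℝ) < 1 / 2 by norm_num)
  refine tendsto_atTop_mono' _ ?_ this
  filter_upwards [eventually_ge_atTop 1] with n hn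
  have : (1 : ℝ) ≤ n := by exact_mod_cast hn
  have h3 : 0 < h (n + 1) ^ d := pow_pos (hh _) _
  push_cast
  nlinarith

def mD {X W : Type} [MeasurableSpace X] (ρ : Measure X) (f : X → W → ℝ) (A : Set X) (w : W) : ℝ :=
  (∫⁻ x in A, ENNReal.ofReal (f x w) ∂ρ).toReal

def cD {X W : Type} [MeasurableSpace X] (ρ : Measure X) (f : X → W → ℝ) (w : W) : Measure X :=
  ρ.withDensity fun x => ENNReal.ofReal (f x w / ∫ x, f x w ∂ρ)

set_option linter.unusedSectionVars false
section
variable {X W : Type} [MeasurableSpace X] [MeasurableSpace W] {ρ : Measure X} [SigmaFinite ρ]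
  {lam : Measure W} [SigmaFinite lam] {f : X → W → ℝ}

lemma mD_univ (hf : Measurable (fun u : X × W => f u.1 u.2)) (hf0 : ∀ x w, 0 ≤ f x w) (w : W) :
    mD ρ f Set.univ w = ∫ x, f x w ∂ρ := by
  rw [integral_eq_lintegral_of_nonneg_ae (Eventually.of_forall fun x => hf0 x w)
    (hf.comp measurable_prodMk_right).aestronglyMeasurable]
  simp [mD]

lemma cD_apply (hf : Measurable (fun u : X × W => f u.1 u.2)) (hf0 : ∀ x w, 0 ≤ f x w) {w : W}
    (hw : 0 < mD ρ f Set.univ w) {A : Set X} (hA : MeasurableSet A) :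
    cD ρ f w A = ENNReal.ofReal (mD ρ f A w / mD ρ f Set.univ w) := by
  have hfin : ∫⁻ x, ENNReal.ofReal (f x w) ∂ρ ≠ ∞ := by
    intro h
    simp [mD, h] at hw
  have hfinA : ∫⁻ x in A, ENNReal.ofReal (f x w) ∂ρ ≠ ∞ :=
    ne_top_of_le_ne_top hfin (setLIntegral_le_lintegral _ _)
  rw [cD, withDensity_apply _ hA, ← mD_univ hf hf0]
  simp_rw [div_eq_mul_inv]
  simp_rw [ENNReal.ofReal_mul (hf0 _ w)]
  rw [lintegral_mul_const _ (by fun_prop), ENNReal.ofReal_mul (show 0 ≤ mD ρ f A w from ENNReal.toReal_nonneg)]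
  congr 1
  rw [mD, ENNReal.ofReal_toReal hfinA]

lemma cD_prob (hf : Measurable (fun u : X × W => f u.1 u.2)) (hf0 : ∀ x w, 0 ≤ f x w) {w : W}
    (hw : 0 < mD ρ f Set.univ w) : IsProbabilityMeasure (cD ρ f w) :=
  ⟨by rw [cD_apply hf hf0 hw MeasurableSet.univ, div_self hw.ne']; simp⟩

lemma cD_univ_le (hf : Measurable (fun u : X × W => f u.1 u.2)) (hf0 : ∀ x w, 0 ≤ f x w) (w : W) :
    cD ρ f w Set.univ ≤ 1 := by
  by_cases hw : 0 < mD ρ f Set.univ w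
  · have := cD_prob hf hf0 hw
    simp
  · have h0 : mD ρ f Set.univ w = 0 := le_antisymm (not_lt.1 hw) ENNReal.toReal_nonneg
    rw [mD_univ hf hf0] at h0
    simp [cD, h0]

lemma measurable_marg (hf : Measurable (fun u : X × W => f u.1 u.2)) :
    Measurable fun w => ∫ x, f x w ∂ρ := by
  have := (hf.stronglyMeasurable).integral_prod_left' (μ := ρ)
  exact this.measurable

lemma measurable_cD (hf : Measurable (fun u : X × W => f u.1 u.2)) :
    Measurable (cD ρ f) := by
  refine Measure.measurable_of_measurable_coe _ fun A hA => ?_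
  simp only [cD, withDensity_apply _ hA]
  have h2 : Measurable fun u : X × W => ENNReal.ofReal (f u.1 u.2 / ∫ x, f x u.2 ∂ρ) :=
    (hf.div ((measurable_marg hf).comp measurable_snd)).ennreal_ofReal
  exact h2.lintegral_prod_left'

lemma measurable_mD (hf : Measurable (fun u : X × W => f u.1 u.2)) (A : Set X) :
    Measurable (mD ρ f A) := by
  have h2 : Measurable fun u : X × W => ENNReal.ofReal (f u.1 u.2) := hf.ennreal_ofReal
  exact (h2.lintegral_prod_left' (μ := ρ.restrict A)).ennreal_toReal

lemma ae_mass_lt (hf : Measurable (fun u : X × W => f u.1 u.2))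
    (hfin : ∫⁻ w, ∫⁻ x, ENNReal.ofReal (f x w) ∂ρ ∂lam ≠ ∞) :
    ∀ᵐ w ∂lam, ∫⁻ x, ENNReal.ofReal (f x w) ∂ρ < ∞ := by
  refine ae_lt_top ?_ hfin
  exact Measurable.lintegral_prod_left' (f := fun u : X × W => ENNReal.ofReal (f u.1 u.2)) hf.ennreal_ofReal

lemma mD_integrable (hf : Measurable (fun u : X × W => f u.1 u.2))
    (hfin : ∫⁻ w, ∫⁻ x, ENNReal.ofReal (f x w) ∂ρ ∂lam ≠ ∞) (A : Set X) :
    Integrable (mD ρ f A) lam := by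
  have h2 : Measurable fun u : X × W => ENNReal.ofReal (f u.1 u.2) := hf.ennreal_ofReal
  refine integrable_toReal_of_lintegral_ne_top
    (h2.lintegral_prod_left' (μ := ρ.restrict A)).aemeasurable ?_
  exact ne_top_of_le_ne_top hfin (lintegral_mono fun w => setLIntegral_le_lintegral _ _)

lemma mD_le (hf : Measurable (fun u : X × W => f u.1 u.2)) (hf0 : ∀ x w, 0 ≤ f x w)
    (hfin : ∫⁻ w, ∫⁻ x, ENNReal.ofReal (f x w) ∂ρ ∂lam ≠ ∞) {C : ℝ}
    (hC : ∀ w, ∫ x, f x w ∂ρ ≤ C) (A : Set X) : ∀ᵐ w ∂lam, mD ρ f A w ≤ C := by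
  filter_upwards [ae_mass_lt hf hfin] with w hw
  refine le_trans ?_ (hC w)
  rw [← mD_univ hf hf0]
  refine ENNReal.toReal_mono (by simpa using hw.ne) ?_
  simpa using setLIntegral_le_lintegral _ _

lemma mD_law {E : Type} [MeasurableSpace E] {ν : Measure E} {fX : E → X} {fW : E → W}
    (hfX : Measurable fX) (hfW : Measurable fW)
    (hf : Measurable (fun u : X × W => f u.1 u.2)) (hf0 : ∀ x w, 0 ≤ f x w)
    (hfin : ∫⁻ w, ∫⁻ x, ENNReal.ofReal (f x w) ∂ρ ∂lam ≠ ∞)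
    (hν : ν.map (fun v => (fX v, fW v)) =
      (ρ.prod lam).withDensity fun u => ENNReal.ofReal (f u.1 u.2))
    {A : Set X} (hA : MeasurableSet A) {g : W → ℝ} (hg : Measurable g)
    (hgb : ∃ B, ∀ w, |g w| ≤ B) :
    ∫ v, g (fW v) * A.indicator 1 (fX v) ∂ν = ∫ w, g w * mD ρ f A w ∂lam := by
  have h2 : Measurable fun u : X × W => ENNReal.ofReal (f u.1 u.2) := hf.ennreal_ofReal
  obtain ⟨B, hB⟩ := hgb
  have hm : Measurable fun u : X × W => g u.2 * A.indicator (1 : X → ℝ) u.1 :=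
    (hg.comp measurable_snd).mul ((measurable_one.indicator hA).comp measurable_fst)
  have e1 : ∫ v, g (fW v) * A.indicator 1 (fX v) ∂ν =
      ∫ u, g u.2 * A.indicator (1 : X → ℝ) u.1 ∂(ν.map (fun v => (fX v, fW v))) := by
    rw [integral_map (hfX.prodMk hfW).aemeasurable hm.aestronglyMeasurable]
  have hfi : Integrable (fun u : X × W => f u.1 u.2) (ρ.prod lam) := by
    refine ⟨hf.aestronglyMeasurable, ?_⟩
    rw [hasFiniteIntegral_iff_ofReal (Eventually.of_forall fun u => hf0 _ _),
      lintegral_prod_symm' _ h2]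
    exact hfin.lt_top
  have hI : Integrable (fun u : X × W => f u.1 u.2 * (g u.2 * A.indicator (1 : X → ℝ) u.1))
      (ρ.prod lam) := by
    refine hfi.mul_bdd (c := B) hm.aestronglyMeasurable (Eventually.of_forall fun u => ?_)
    rw [norm_mul, Real.norm_eq_abs]
    have : ‖A.indicator (1 : X → ℝ) u.1‖ ≤ 1 := by
      by_cases h : u.1 ∈ A <;> simp [h]
    calc |g u.2| * _ ≤ B * 1 := mul_le_mul (hB _) this (norm_nonneg _) ((abs_nonneg _).trans (hB u.2))
      _ = B := mul_one B
  rw [e1, hν, integral_withDensity_eq_integral_toReal_smul h2 (by simp)]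
  simp only [ENNReal.toReal_ofReal (hf0 _ _), smul_eq_mul]
  rw [integral_prod_symm _ hI]
  refine integral_congr_ae ?_
  filter_upwards [ae_mass_lt hf hfin] with w hw
  have e2 : mD ρ f A w = ∫ x in A, f x w ∂ρ := by
    rw [integral_eq_lintegral_of_nonneg_ae (Eventually.of_forall fun x => hf0 x w)
      (hf.comp measurable_prodMk_right).aestronglyMeasurable]
    rfl
  rw [e2, ← integral_indicator hA, ← integral_const_mul]
  congr 1
  ext x
  by_cases h : x ∈ A <;> simp [h, mul_comm]

lemma fW_ac {E : Type} [MeasurableSpace E] {ν : Measure E} {fX : E → X} {fW : E → W}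
    (hfX : Measurable fX) (hfW : Measurable fW)
    (hν : ν.map (fun v => (fX v, fW v)) =
      (ρ.prod lam).withDensity fun u => ENNReal.ofReal (f u.1 u.2)) : ν.map fW ≪ lam := by
  have e : ν.map fW = (ν.map (fun v => (fX v, fW v))).map Prod.snd := by
    rw [Measure.map_map measurable_snd (hfX.prodMk hfW)]; rfl
  rw [e, hν]
  exact ((withDensity_absolutelyContinuous _ _).map measurable_snd).trans
    Measure.quasiMeasurePreserving_snd.absolutelyContinuous

lemma ae_mD_pos {E : Type} [MeasurableSpace E] {ν : Measure E} {fX : E → X} {fW : E → W}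
    (hfX : Measurable fX) (hfW : Measurable fW)
    (hf : Measurable (fun u : X × W => f u.1 u.2))
    (hfin : ∫⁻ w, ∫⁻ x, ENNReal.ofReal (f x w) ∂ρ ∂lam ≠ ∞)
    (hν : ν.map (fun v => (fX v, fW v)) =
      (ρ.prod lam).withDensity fun u => ENNReal.ofReal (f u.1 u.2)) :
    ∀ᵐ v ∂ν, 0 < mD ρ f Set.univ (fW v) := by
  have h2 : Measurable fun u : X × W => ENNReal.ofReal (f u.1 u.2) := hf.ennreal_ofReal
  have hB : MeasurableSet {w | mD ρ f Set.univ w = 0} :=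
    measurable_mD hf _ (measurableSet_singleton 0)
  have hB' : MeasurableSet {u : X × W | mD ρ f Set.univ u.2 = 0} := measurable_snd hB
  have h0 : ν.map (fun v => (fX v, fW v)) {u : X × W | mD ρ f Set.univ u.2 = 0} = 0 := by
    rw [hν, withDensity_apply _ hB', ← lintegral_indicator hB', lintegral_prod_symm' _ (h2.indicator hB')]
    rw [lintegral_eq_zero_iff (Measurable.lintegral_prod_left' (h2.indicator hB'))]
    filter_upwards [ae_mass_lt hf hfin] with w hw
    by_cases h : mD ρ f Set.univ w = 0
    · have h' := h
      simp only [mD, Measure.restrict_univ, ENNReal.toReal_eq_zero_iff, hw.ne, or_false] at h'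
      simp only [Pi.zero_apply]
      rw [← h']
      refine lintegral_congr fun x => ?_
      rw [Set.indicator_of_mem]
      exact h
    · simp only [Pi.zero_apply]
      rw [lintegral_eq_zero_of_ae_eq_zero]
      refine Eventually.of_forall fun x => ?_
      exact Set.indicator_of_notMem (s := {u : X × W | mD ρ f Set.univ u.2 = 0}) (a := (x, w)) h _
  rw [Measure.map_apply (hfX.prodMk hfW) hB'] at h0
  have : ∀ᵐ v ∂ν, mD ρ f Set.univ (fW v) ≠ 0 := by
    rw [ae_iff]
    simpa using h0
  filter_upwards [this] with v hv
  exact lt_of_le_of_ne ENNReal.toReal_nonneg (Ne.symm hv)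
end

lemma measurable_ballT {T : Type} [MeasurableSpace T] {d : ℕ} {R M M' : T → Measure (Euc d)}
    (hR : Measurable R) (hM : Measurable M) (hM' : Measurable M')
    (hR1 : ∀ t, R t Set.univ ≤ 1) (hM1 : ∀ t, M t Set.univ ≤ 1) (hM1' : ∀ t, M' t Set.univ ≤ 1) :
    Measurable fun t => ballT (R t) (M t) (M' t) := by
  let kR : Kernel T (Euc d) := ⟨R, hR⟩
  let kM : Kernel T (Euc d) := ⟨M, hM⟩
  let kM' : Kernel T (Euc d) := ⟨M', hM'⟩
  have : IsFiniteKernel kR := ⟨1, by simp, hR1⟩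
  have : IsFiniteKernel kM := ⟨1, by simp, hM1⟩
  have : IsFiniteKernel kM' := ⟨1, by simp, hM1'⟩
  have h := Kernel.measurable_coe ((kR ×ₖ kR) ×ₖ (kM ×ₖ kM')) (isClosed_ballSet d).measurableSet
  convert h.ennreal_toReal using 1
  ext t
  rw [Kernel.prod_apply, Kernel.prod_apply, Kernel.prod_apply]
  rfl

lemma measurable_ballDiv {T : Type} [MeasurableSpace T] {d : ℕ} {P Q : T → Measure (Euc d)}
    (hP : Measurable P) (hQ : Measurable Q)
    (hP1 : ∀ t, P t Set.univ ≤ 1) (hQ1 : ∀ t, Q t Set.univ ≤ 1) :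
    Measurable fun t => ballDiv (P t) (Q t) := by
  have h : (fun t => ballDiv (P t) (Q t)) = fun t =>
      (ballT (P t) (P t) (P t) - 2 * ballT (P t) (P t) (Q t) + ballT (P t) (Q t) (Q t))
      + (ballT (Q t) (P t) (P t) - 2 * ballT (Q t) (P t) (Q t) + ballT (Q t) (Q t) (Q t)) := by
    ext t
    have : IsFiniteMeasure (P t) := ⟨(hP1 t).trans_lt (by simp)⟩
    have : IsFiniteMeasure (Q t) := ⟨(hQ1 t).trans_lt (by simp)⟩
    rw [ballDiv_eq]
  rw [h]
  have := measurable_ballT hP hP hP hP1 hP1 hP1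
  have := measurable_ballT hP hP hQ hP1 hP1 hQ1
  have := measurable_ballT hP hQ hQ hP1 hQ1 hQ1
  have := measurable_ballT hQ hP hP hQ1 hP1 hP1
  have := measurable_ballT hQ hP hQ hQ1 hP1 hQ1
  have := measurable_ballT hQ hQ hQ hQ1 hQ1 hQ1
  fun_prop

lemma measurable_wMeas {T X : Type} [MeasurableSpace T] [MeasurableSpace X] {n : ℕ} (k0 : ℝ)
    {x : T → X} {c : T → Fin n → ℝ} {xs : T → Fin n → X} (hx : Measurable x)
    (hc : ∀ i, Measurable fun t => c t i) (hxs : ∀ i, Measurable fun t => xs t i) :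
    Measurable fun t => wMeas k0 (x t) (c t) (xs t) := by
  refine Measure.measurable_of_measurable_coe _ fun A hA => ?_
  simp only [wMeas, Measure.smul_apply, Measure.add_apply, Measure.coe_finsetSum,
    Finset.sum_apply, smul_eq_mul, Measure.dirac_apply' _ hA]
  have h1 : Measurable fun t => A.indicator (1 : X → ℝ≥0∞) (x t) :=
    (measurable_one.indicator hA).comp hx
  have h2 : ∀ i, Measurable fun t => A.indicator (1 : X → ℝ≥0∞) (xs t i) := fun i =>
    (measurable_one.indicator hA).comp (hxs i)
  refine Measurable.mul (Measurable.inv ?_) ?_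
  · exact measurable_const.add (Finset.measurable_fun_sum _ fun i _ => (hc i).ennreal_ofReal)
  · exact (measurable_const.mul h1).add
      (Finset.measurable_fun_sum _ fun i _ => (hc i).ennreal_ofReal.mul (h2 i))

/-- All the hypotheses on one of the two kernel estimators. -/
structure EstHyp {E X W : Type} [MeasurableSpace E] [MeasurableSpace X]
    [NormedAddCommGroup W] [NormedSpace ℝ W] [MeasurableSpace W]
    (ρ : Measure X) (lam : Measure W) (ν : Measure E) (fX : E → X) (fW : E → W)
    (k : W → ℝ) (h : ℕ → ℝ) (f : X → W → ℝ) : Prop where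
  hk : Measurable k
  hk0 : ∀ u, 0 ≤ k u
  hkM : ∃ M, ∀ u, k u ≤ M
  hkR : ∃ R, 0 < R ∧ ∀ u, R < ‖u‖ → k u = 0
  hki : Integrable k lam
  hkpos : 0 < ∫ u, k u ∂lam
  hh : ∀ n, 0 < h n
  hlim : Tendsto h atTop (𝓝 0)
  hnh : Tendsto (fun n : ℕ => (n : ℝ) * h n ^ Module.finrank ℝ W) atTop atTop
  hfX : Measurable fX
  hfW : Measurable fW
  hf : Measurable (fun u : X × W => f u.1 u.2)
  hf0 : ∀ x w, 0 ≤ f x w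
  hfin : ∫⁻ w, ∫⁻ x, ENNReal.ofReal (f x w) ∂ρ ∂lam ≠ ∞
  hC : ∃ C, ∀ w, ∫ x, f x w ∂ρ ≤ C
  hν : ν.map (fun v => (fX v, fW v)) =
      (ρ.prod lam).withDensity fun u => ENNReal.ofReal (f u.1 u.2)

lemma EstHyp.conv {Ω E X W : Type} [MeasurableSpace Ω] [MeasurableSpace E] [MeasurableSpace X]
    [NormedAddCommGroup W] [NormedSpace ℝ W] [FiniteDimensional ℝ W] [MeasurableSpace W]
    [BorelSpace W] {ρ : Measure X} [SigmaFinite ρ] {lam : Measure W} [lam.IsAddHaarMeasure]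
    {ν : Measure E} {fX : E → X} {fW : E → W}
    {k : W → ℝ} {h : ℕ → ℝ} {f : X → W → ℝ} (H : EstHyp ρ lam ν fX fW k h f)
    {μ : Measure Ω} [IsProbabilityMeasure μ] {V : ℕ → Ω → E} (hV : ∀ i, Measurable (V i))
    (hind : iIndepFun V μ) (hlaw : ∀ i, μ.map (V i) = ν)
    {S : Set (Set X)} (hSc : S.Countable) (hSm : ∀ A ∈ S, MeasurableSet A) (hSu : Set.univ ∈ S) :
    ∀ᵐ v ∂ν, 0 < mD ρ f Set.univ (fW v) ∧ ∀ N : ℕ → ℕ, Tendsto N atTop atTop →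
      (∀ j, (2 : ℝ) ^ j ≤ N j * h (N j) ^ Module.finrank ℝ W) →
      ∀ᵐ ω ∂μ,
        (∀ᶠ j in atTop, IsProbabilityMeasure
          (wMeas (k 0) (fX v) (fun i : Fin (N j) => k ((h (N j))⁻¹ • (fW v - fW (V i ω))))
          (fun i => fX (V i ω)))) ∧
        ∀ A ∈ S, Tendsto (fun j =>
          wMeas (k 0) (fX v) (fun i : Fin (N j) => k ((h (N j))⁻¹ • (fW v - fW (V i ω))))
            (fun i => fX (V i ω)) A) atTop (𝓝 (cD ρ f (fW v) A)) := by
  obtain ⟨M, hM⟩ := H.hkM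
  obtain ⟨R, hR, hkR⟩ := H.hkR
  obtain ⟨C, hC⟩ := H.hC
  have hE := est_tendsto lam H.hk H.hk0 hM hR hkR H.hki H.hkpos H.hh H.hlim hV hind hlaw H.hfX
    H.hfW hSc hSm hSu (m := mD ρ f) (fun A _ => mD_integrable H.hf H.hfin A)
    (C := C) (fun A _ => mD_le H.hf H.hf0 H.hfin hC A)
    (fun A hA g hg hgb => mD_law H.hfX H.hfW H.hf H.hf0 H.hfin H.hν (hSm A hA) hg hgb)
  have hE' := ae_of_ae_map H.hfW.aemeasurable ((fW_ac H.hfX H.hfW H.hν).ae_le hE)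
  filter_upwards [hE', ae_mD_pos H.hfX H.hfW H.hf H.hfin H.hν] with v hv hpos
  refine ⟨hpos, fun N hN hNb => ?_⟩
  filter_upwards [hv hpos (k 0) (fX v) (H.hk0 0) N hN hNb] with ω hω
  refine ⟨hω.1, fun A hA => ?_⟩
  rw [cD_apply H.hf H.hf0 hpos (hSm A hA)]
  exact hω.2 A hA

def Gm {E W1 W2 : Type} {d : ℕ} [NormedAddCommGroup W1] [NormedSpace ℝ W1]
    [NormedAddCommGroup W2] [NormedSpace ℝ W2] (k1 : W1 → ℝ) (k2 : W2 → ℝ) (t1 t2 : ℝ)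
    (fX : E → Euc d) (fW1 : E → W1) (fW2 : E → W2) {n : ℕ} (v : E) (r : Fin n → E) : ℝ :=
  ballDiv (wMeas (k1 0) (fX v) (fun i => k1 (t1⁻¹ • (fW1 v - fW1 (r i)))) (fun i => fX (r i)))
    (wMeas (k2 0) (fX v) (fun i => k2 (t2⁻¹ • (fW2 v - fW2 (r i)))) (fun i => fX (r i)))

set_option linter.unusedSectionVars false
section
variable {Ω E W1 W2 : Type} {d : ℕ} [MeasurableSpace Ω] [MeasurableSpace E]
    [NormedAddCommGroup W1] [NormedSpace ℝ W1] [FiniteDimensional ℝ W1] [MeasurableSpace W1]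
    [BorelSpace W1] {lam1 : Measure W1} [lam1.IsAddHaarMeasure]
    [NormedAddCommGroup W2] [NormedSpace ℝ W2] [FiniteDimensional ℝ W2] [MeasurableSpace W2]
    [BorelSpace W2] {lam2 : Measure W2} [lam2.IsAddHaarMeasure]
    {ν : Measure E} {fX : E → Euc d} {fW1 : E → W1} {fW2 : E → W2}
    {k1 : W1 → ℝ} {h1 : ℕ → ℝ} {f1 : Euc d → W1 → ℝ}
    {k2 : W2 → ℝ} {h2 : ℕ → ℝ} {f2 : Euc d → W2 → ℝ}

lemma Gm_bound (k1 : W1 → ℝ) (k2 : W2 → ℝ) (t1 t2 : ℝ)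
    (fX : E → Euc d) (fW1 : E → W1) (fW2 : E → W2) {n : ℕ} (v : E) (r : Fin n → E) :
    |Gm k1 k2 t1 t2 fX fW1 fW2 v r| ≤ 8 :=
  abs_ballDiv_le _ _ (wMeas_univ_le _ _ _ _) (wMeas_univ_le _ _ _ _)

lemma Gm_measurable (hk1 : Measurable k1) (hk2 : Measurable k2) (t1 t2 : ℝ)
    (hfX : Measurable fX) (hfW1 : Measurable fW1) (hfW2 : Measurable fW2) (n : ℕ) :
    Measurable fun q : E × (Fin n → E) => Gm k1 k2 t1 t2 fX fW1 fW2 q.1 q.2 := by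
  unfold Gm
  refine measurable_ballDiv ?_ ?_ (fun _ => wMeas_univ_le _ _ _ _) (fun _ => wMeas_univ_le _ _ _ _)
  · exact measurable_wMeas _ (by fun_prop) (fun i => by fun_prop) (fun i => by fun_prop)
  · exact measurable_wMeas _ (by fun_prop) (fun i => by fun_prop) (fun i => by fun_prop)

def Tm (f1 : Euc d → W1 → ℝ) (f2 : Euc d → W2 → ℝ) (fW1 : E → W1) (fW2 : E → W2) (v : E) : ℝ :=
  ballDiv (cD volume f1 (fW1 v)) (cD volume f2 (fW2 v))

lemma Tm_bound (H1 : EstHyp volume lam1 ν fX fW1 k1 h1 f1)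
    (H2 : EstHyp volume lam2 ν fX fW2 k2 h2 f2) (v : E) : |Tm f1 f2 fW1 fW2 v| ≤ 8 :=
  abs_ballDiv_le _ _ (cD_univ_le H1.hf H1.hf0 _) (cD_univ_le H2.hf H2.hf0 _)

lemma Tm_measurable (H1 : EstHyp volume lam1 ν fX fW1 k1 h1 f1)
    (H2 : EstHyp volume lam2 ν fX fW2 k2 h2 f2) : Measurable (Tm f1 f2 fW1 fW2) :=
  measurable_ballDiv ((measurable_cD H1.hf).comp H1.hfW) ((measurable_cD H2.hf).comp H2.hfW)
    (fun _ => cD_univ_le H1.hf H1.hf0 _) (fun _ => cD_univ_le H2.hf H2.hf0 _)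

lemma pointwise_conv (H1 : EstHyp volume lam1 ν fX fW1 k1 h1 f1)
    (H2 : EstHyp volume lam2 ν fX fW2 k2 h2 f2)
    {μ : Measure Ω} [IsProbabilityMeasure μ] {V : ℕ → Ω → E} (hV : ∀ i, Measurable (V i))
    (hind : iIndepFun V μ) (hlaw : ∀ i, μ.map (V i) = ν) :
    ∀ᵐ v ∂ν, Tendsto (fun n => ∫ ω, |Gm k1 k2 (h1 n) (h2 n) fX fW1 fW2 v
      (fun i : Fin n => V i ω) - Tm f1 f2 fW1 fW2 v| ∂μ) atTop (𝓝 0) := by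
  obtain ⟨S, hSc, hSpi, hSo, hSu, hSb⟩ := exists_piBasis d
  have hSm : ∀ A ∈ S, MeasurableSet A := fun A hA => (hSo A hA).measurableSet
  filter_upwards [H1.conv hV hind hlaw hSc hSm hSu, H2.conv hV hind hlaw hSc hSm hSu]
    with v ⟨hp1, hv1⟩ ⟨hp2, hv2⟩
  refine tendsto_of_subseq_tendsto fun ns hns => ?_
  have hex : ∀ j : ℕ, ∃ m : ℕ, j ≤ ns m ∧
      (2 : ℝ) ^ j ≤ ns m * h1 (ns m) ^ Module.finrank ℝ W1 ∧
      (2 : ℝ) ^ j ≤ ns m * h2 (ns m) ^ Module.finrank ℝ W2 := by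
    intro j
    have a1 := (H1.hnh.comp hns).eventually_ge_atTop ((2 : ℝ) ^ j)
    have a2 := (H2.hnh.comp hns).eventually_ge_atTop ((2 : ℝ) ^ j)
    obtain ⟨m, hm⟩ := ((hns.eventually_ge_atTop j).and (a1.and a2)).exists
    exact ⟨m, hm.1, hm.2.1, hm.2.2⟩
  choose ms hms using hex
  refine ⟨ms, ?_⟩
  have hN : Tendsto (fun j => ns (ms j)) atTop atTop :=
    tendsto_atTop_mono (fun j => (hms j).1) tendsto_id
  have e1 := hv1 _ hN fun j => (hms j).2.1
  have e2 := hv2 _ hN fun j => (hms j).2.2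
  have i1 := cD_prob H1.hf H1.hf0 hp1
  have i2 := cD_prob H2.hf H2.hf0 hp2
  have ae : ∀ᵐ ω ∂μ, Tendsto (fun j => |Gm k1 k2 (h1 (ns (ms j))) (h2 (ns (ms j))) fX fW1 fW2 v
      (fun i : Fin (ns (ms j)) => V i ω) - Tm f1 f2 fW1 fW2 v|) atTop (𝓝 0) := by
    filter_upwards [e1, e2] with ω ⟨q1, c1⟩ ⟨q2, c2⟩
    have := ballDiv_tendsto hSpi hSo hSb (P := cD volume f1 (fW1 v)) (Q := cD volume f2 (fW2 v))
      (withDensity_absolutelyContinuous _ _) (withDensity_absolutelyContinuous _ _) q1 q2 c1 c2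
    have := (this.sub_const (Tm f1 f2 fW1 fW2 v)).abs
    simpa [Tm, Gm] using this
  have hdom := tendsto_integral_of_dominated_convergence (μ := μ) (fun _ => (16 : ℝ))
    (F := fun j ω => |Gm k1 k2 (h1 (ns (ms j))) (h2 (ns (ms j))) fX fW1 fW2 v
      (fun i : Fin (ns (ms j)) => V i ω) - Tm f1 f2 fW1 fW2 v|) (f := fun _ => 0) ?_ ?_ ?_ ae
  · simpa using hdom
  · intro j
    have hm := (Gm_measurable H1.hk H2.hk (h1 (ns (ms j))) (h2 (ns (ms j))) H1.hfX H1.hfW H2.hfW (ns (ms j)))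
    have hm2 : Measurable fun ω => (v, fun i : Fin (ns (ms j)) => V i ω) :=
      measurable_const.prodMk (measurable_pi_lambda _ fun i => hV i)
    have hm3 := hm.comp hm2
    exact (continuous_abs.measurable.comp (hm3.sub_const _)).aestronglyMeasurable
  · exact integrable_const _
  · intro j
    refine Eventually.of_forall fun ω => ?_
    rw [Real.norm_eq_abs, abs_abs]
    refine (abs_sub _ _).trans ?_
    have := Gm_bound k1 k2 (h1 (ns (ms j))) (h2 (ns (ms j))) fX fW1 fW2 v
      (fun i : Fin (ns (ms j)) => V i ω)
    have := Tm_bound H1 H2 v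
    linarith
end

lemma tuple_law {Ω E : Type} [MeasurableSpace Ω] [MeasurableSpace E] {μ : Measure Ω}
    [IsProbabilityMeasure μ] {V : ℕ → Ω → E} (hV : ∀ i, Measurable (V i))
    (hind : iIndepFun V μ) {ν : Measure E} (hlaw : ∀ i, μ.map (V i) = ν) (n : ℕ) :
    μ.map (fun ω (i : Fin n) => V i ω) = Measure.pi fun _ => ν := by
  have h := (iIndepFun_iff_map_fun_eq_pi_map (f := fun (i : Fin n) => V i)
    (fun i => (hV i).aemeasurable)).1 (hind.precomp Fin.val_injective)
  rw [h]
  simp_rw [hlaw]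

lemma integral_leave_one {Ω E : Type} [MeasurableSpace Ω] [MeasurableSpace E] {μ : Measure Ω}
    [IsProbabilityMeasure μ] {V : ℕ → Ω → E} (hV : ∀ i, Measurable (V i))
    (hind : iIndepFun V μ) {ν : Measure E} [IsProbabilityMeasure ν]
    (hlaw : ∀ i, μ.map (V i) = ν) {n : ℕ}
    {F : E × (Fin n → E) → ℝ} (hF : Measurable F) {C : ℝ} (hC : ∀ q, |F q| ≤ C) (s : Fin (n + 1)) :
    ∫ ω, F (V s ω, fun i => V (s.succAbove i) ω) ∂μ =
      ∫ v, ∫ ω, F (v, fun i : Fin n => V i ω) ∂μ ∂ν := by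
  have hT : ∀ m : ℕ, Measurable fun ω (i : Fin m) => V i ω := fun m =>
    measurable_pi_lambda _ fun i => hV i
  have hmp := measurePreserving_piFinSuccAbove (fun _ : Fin (n + 1) => ν) s
  have e1 : ∫ ω, F (V s ω, fun i => V (s.succAbove i) ω) ∂μ =
      ∫ r, F (MeasurableEquiv.piFinSuccAbove (fun _ : Fin (n + 1) => E) s r)
        ∂(μ.map (fun ω (i : Fin (n + 1)) => V i ω)) := by
    have hm : Measurable fun r : Fin (n + 1) → E =>
        F (MeasurableEquiv.piFinSuccAbove (fun _ : Fin (n + 1) => E) s r) :=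
      hF.comp (MeasurableEquiv.measurable _)
    rw [integral_map (hT _).aemeasurable hm.aestronglyMeasurable]
    rfl
  rw [e1, tuple_law hV hind hlaw, hmp.integral_comp (MeasurableEquiv.measurableEmbedding _),
    integral_prod]
  · congr 1
    ext v
    have hm : Measurable fun r : Fin n → E => F (v, r) := hF.comp measurable_prodMk_left
    rw [← tuple_law hV hind hlaw n, integral_map (hT _).aemeasurable hm.aestronglyMeasurable]
  · exact Integrable.of_bound hF.aestronglyMeasurable C (Eventually.of_forall hC)

set_option linter.unusedSectionVars false
section
variable {Ω E W1 W2 : Type} {d : ℕ} [MeasurableSpace Ω] [MeasurableSpace E]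
    [NormedAddCommGroup W1] [NormedSpace ℝ W1] [FiniteDimensional ℝ W1] [MeasurableSpace W1]
    [BorelSpace W1] {lam1 : Measure W1} [lam1.IsAddHaarMeasure]
    [NormedAddCommGroup W2] [NormedSpace ℝ W2] [FiniteDimensional ℝ W2] [MeasurableSpace W2]
    [BorelSpace W2] {lam2 : Measure W2} [lam2.IsAddHaarMeasure]
    {ν : Measure E} {fX : E → Euc d} {fW1 : E → W1} {fW2 : E → W2}
    {k1 : W1 → ℝ} {h1 : ℕ → ℝ} {f1 : Euc d → W1 → ℝ}
    {k2 : W2 → ℝ} {h2 : ℕ → ℝ} {f2 : Euc d → W2 → ℝ}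

lemma abs_Gm_sub_Tm_le (H1 : EstHyp volume lam1 ν fX fW1 k1 h1 f1)
    (H2 : EstHyp volume lam2 ν fX fW2 k2 h2 f2) (n : ℕ) (v : E) (r : Fin n → E) :
    |Gm k1 k2 (h1 n) (h2 n) fX fW1 fW2 v r - Tm f1 f2 fW1 fW2 v| ≤ 16 := by
  refine (abs_sub _ _).trans ?_
  have := Gm_bound k1 k2 (h1 n) (h2 n) fX fW1 fW2 v r
  have := Tm_bound H1 H2 v
  linarith

lemma measurable_Gm_sub_Tm (H1 : EstHyp volume lam1 ν fX fW1 k1 h1 f1)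
    (H2 : EstHyp volume lam2 ν fX fW2 k2 h2 f2) (n : ℕ) :
    Measurable fun q : E × (Fin n → E) =>
      |Gm k1 k2 (h1 n) (h2 n) fX fW1 fW2 q.1 q.2 - Tm f1 f2 fW1 fW2 q.1| := by
  have h1 := Gm_measurable H1.hk H2.hk (h1 n) (h2 n) H1.hfX H1.hfW H2.hfW n
  have h2 : Measurable fun q : E × (Fin n → E) => Tm f1 f2 fW1 fW2 q.1 :=
    (Tm_measurable H1 H2).comp measurable_fst
  exact continuous_abs.measurable.comp (h1.sub h2)

lemma mean_conv (H1 : EstHyp volume lam1 ν fX fW1 k1 h1 f1)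
    (H2 : EstHyp volume lam2 ν fX fW2 k2 h2 f2) [IsProbabilityMeasure ν]
    {μ : Measure Ω} [IsProbabilityMeasure μ] {V : ℕ → Ω → E} (hV : ∀ i, Measurable (V i))
    (hind : iIndepFun V μ) (hlaw : ∀ i, μ.map (V i) = ν) :
    Tendsto (fun n => ∫ v, ∫ ω, |Gm k1 k2 (h1 n) (h2 n) fX fW1 fW2 v
      (fun i : Fin n => V i ω) - Tm f1 f2 fW1 fW2 v| ∂μ ∂ν) atTop (𝓝 0) := by
  have hdom := tendsto_integral_of_dominated_convergence (μ := ν) (fun _ => (16 : ℝ))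
    (F := fun n v => ∫ ω, |Gm k1 k2 (h1 n) (h2 n) fX fW1 fW2 v
      (fun i : Fin n => V i ω) - Tm f1 f2 fW1 fW2 v| ∂μ) (f := fun _ => 0) ?_ ?_ ?_
      (pointwise_conv H1 H2 hV hind hlaw)
  · simpa using hdom
  · intro n
    have hm : Measurable fun q : E × Ω => |Gm k1 k2 (h1 n) (h2 n) fX fW1 fW2 q.1
      (fun i : Fin n => V i q.2) - Tm f1 f2 fW1 fW2 q.1| := by
      have : Measurable fun q : E × Ω => (q.1, fun i : Fin n => V i q.2) :=
        measurable_fst.prodMk (measurable_pi_lambda _ fun i => (hV i).comp measurable_snd)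
      have h3 := (measurable_Gm_sub_Tm H1 H2 n).comp this
      simp only [Function.comp_def] at h3
      exact h3
    exact hm.stronglyMeasurable.integral_prod_right'.aestronglyMeasurable
  · exact integrable_const _
  · intro n
    refine Eventually.of_forall fun v => ?_
    have := norm_integral_le_of_norm_le_const (μ := μ) (C := 16)
      (f := fun ω => |Gm k1 k2 (h1 n) (h2 n) fX fW1 fW2 v
      (fun i : Fin n => V i ω) - Tm f1 f2 fW1 fW2 v|) (Eventually.of_forall fun ω => by
        rw [Real.norm_eq_abs, abs_abs]; exact abs_Gm_sub_Tm_le H1 H2 n _ _)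
    simpa using this

lemma abstract_consistency (H1 : EstHyp volume lam1 ν fX fW1 k1 h1 f1)
    (H2 : EstHyp volume lam2 ν fX fW2 k2 h2 f2) [IsProbabilityMeasure ν]
    {μ : Measure Ω} [IsProbabilityMeasure μ] {V : ℕ → Ω → E} (hV : ∀ i, Measurable (V i))
    (hind : iIndepFun V μ) (hlaw : ∀ i, μ.map (V i) = ν)
    {b : E → ℝ} (hb : Measurable b) (hb0 : ∀ v, 0 ≤ b v) {Cb : ℝ} (hbC : ∀ v, b v ≤ Cb) :
    TendstoInMeasure μ (fun (n : ℕ) ω => ((n + 1 : ℕ) : ℝ)⁻¹ * ∑ s : Fin (n + 1),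
      Gm k1 k2 (h1 n) (h2 n) fX fW1 fW2 (V s ω) (fun i => V (s.succAbove i) ω) * b (V s ω))
      atTop (fun _ => ∫ v, Tm f1 f2 fW1 fW2 v * b v ∂ν) := by
  set T : E → ℝ := Tm f1 f2 fW1 fW2 with hTdef
  have hTm : Measurable T := Tm_measurable H1 H2
  have hTb : ∀ v, |T v| ≤ 8 := Tm_bound H1 H2
  set L := ∫ v, T v * b v ∂ν with hL
  set G : (n : ℕ) → E → (Fin n → E) → ℝ := fun n => Gm k1 k2 (h1 n) (h2 n) fX fW1 fW2 with hG
  have hv0 : Nonempty E := nonempty_of_isProbabilityMeasure ν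
  have hCb : 0 ≤ Cb := (hb0 hv0.some).trans (hbC hv0.some)
  set Sn : ℕ → Ω → ℝ := fun n ω => (∑ i ∈ Finset.range (n + 1), T (V i ω) * b (V i ω)) / ((n + 1 : ℕ) : ℝ)
    with hSn
  have hTbm : Measurable fun v => T v * b v := hTm.mul hb
  have hTbb : ∀ v, |T v * b v| ≤ 8 * Cb := fun v => by
    rw [abs_mul, abs_of_nonneg (hb0 v)]
    exact mul_le_mul (hTb v) (hbC v) (hb0 v) (by norm_num)
  have hSnm : ∀ n, Measurable (Sn n) := fun n => by
    refine Measurable.div_const (Finset.measurable_fun_sum _ fun i _ => ?_) _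
    exact hTbm.comp (hV i)
  have hSnb : ∀ n ω, |Sn n ω| ≤ 8 * Cb := fun n ω => by
    rw [hSn]
    simp only
    rw [abs_div, Nat.abs_cast, div_le_iff₀ (by positivity)]
    refine (Finset.abs_sum_le_sum_abs _ _).trans ?_
    refine (Finset.sum_le_sum fun i _ => hTbb (V i ω)).trans ?_
    simp [mul_comm]
  -- law of large numbers
  have hlln : ∀ᵐ ω ∂μ, Tendsto (fun n => Sn n ω) atTop (𝓝 L) := by
    have hs := strong_law_ae_real (μ := μ) (fun i ω => T (V i ω) * b (V i ω)) ?_ ?_ ?_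
    · have hL' : ∫ ω, T (V 0 ω) * b (V 0 ω) ∂μ = L := by
        rw [hL, ← hlaw 0, integral_map (hV 0).aemeasurable hTbm.aestronglyMeasurable]
      rw [hL'] at hs
      filter_upwards [hs] with ω hω
      exact (tendsto_add_atTop_iff_nat 1).2 hω
    · exact Integrable.of_bound (hTbm.comp (hV 0)).aestronglyMeasurable (8 * Cb)
        (Eventually.of_forall fun ω => hTbb _)
    · intro i j hij
      exact (hind.indepFun hij).comp hTbm hTbm
    · intro i
      have : IdentDistrib (V i) (V 0) μ μ :=
        ⟨(hV i).aemeasurable, (hV 0).aemeasurable, by rw [hlaw, hlaw]⟩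
      exact this.comp hTbm
  have hS0 : Tendsto (fun n => ∫ ω, |Sn n ω - L| ∂μ) atTop (𝓝 0) := by
    have hdom := tendsto_integral_of_dominated_convergence (μ := μ) (fun _ => 8 * Cb + |L|)
      (F := fun n ω => |Sn n ω - L|) (f := fun _ => 0)
      (fun n => (continuous_abs.measurable.comp ((hSnm n).sub_const L)).aestronglyMeasurable)
      (integrable_const _) ?_ ?_
    · simpa using hdom
    · intro n
      refine Eventually.of_forall fun ω => ?_
      rw [Real.norm_eq_abs, abs_abs]
      exact (abs_sub _ _).trans (by gcongr; exact hSnb n ω)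
    · filter_upwards [hlln] with ω hω
      simpa using (hω.sub_const L).abs
  -- the main error term
  have hBn := mean_conv H1 H2 hV hind hlaw
  set Bn : ℕ → ℝ := fun n => ∫ v, ∫ ω, |G n v (fun i : Fin n => V i ω) - T v| ∂μ ∂ν with hBndef
  have hBs : ∀ n (s : Fin (n + 1)),
      ∫ ω, |G n (V s ω) (fun i => V (s.succAbove i) ω) - T (V s ω)| ∂μ = Bn n := fun n s =>
    integral_leave_one hV hind hlaw (measurable_Gm_sub_Tm H1 H2 n)
      (C := 16) (fun q => by rw [abs_abs]; exact abs_Gm_sub_Tm_le H1 H2 n _ _) s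
  set en : ℕ → Ω → ℝ := fun n ω => ((n + 1 : ℕ) : ℝ)⁻¹ * ∑ s : Fin (n + 1),
      G n (V s ω) (fun i => V (s.succAbove i) ω) * b (V s ω) with hen
  have hpm : ∀ n (s : Fin (n + 1)),
      Measurable fun ω => (V s ω, fun i : Fin n => V (s.succAbove i) ω) := fun n s =>
    (hV s).prodMk (measurable_pi_lambda _ fun i => hV _)
  have hDi : ∀ n (s : Fin (n + 1)),
      Integrable (fun ω => |G n (V s ω) (fun i => V (s.succAbove i) ω) - T (V s ω)|) μ := fun n s =>
    Integrable.of_bound ((measurable_Gm_sub_Tm H1 H2 n).comp (hpm n s)).aestronglyMeasurable 16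
      (Eventually.of_forall fun ω => by
        rw [Real.norm_eq_abs, abs_abs]; exact abs_Gm_sub_Tm_le H1 H2 n _ _)
  have henm : ∀ n, Measurable (en n) := fun n => by
    refine measurable_const.mul (Finset.measurable_fun_sum _ fun s _ => ?_)
    exact ((Gm_measurable H1.hk H2.hk (h1 n) (h2 n) H1.hfX H1.hfW H2.hfW n).comp
      (hpm n s)).mul (hb.comp (hV s))
  have hpt : ∀ n ω, |en n ω - L| ≤ ((n + 1 : ℕ) : ℝ)⁻¹ * (∑ s : Fin (n + 1),
      |G n (V s ω) (fun i => V (s.succAbove i) ω) - T (V s ω)|) * Cb + |Sn n ω - L| := by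
    intro n ω
    have hd : en n ω - Sn n ω = ((n + 1 : ℕ) : ℝ)⁻¹ * ∑ s : Fin (n + 1),
        (G n (V s ω) (fun i => V (s.succAbove i) ω) - T (V s ω)) * b (V s ω) := by
      simp only [hen, hSn]
      rw [Finset.sum_range (fun i => T (V i ω) * b (V i ω)), div_eq_inv_mul, ← mul_sub, ← Finset.sum_sub_distrib]
      simp only [sub_mul]
    have h3 : |en n ω - Sn n ω| ≤ ((n + 1 : ℕ) : ℝ)⁻¹ * (∑ s : Fin (n + 1),
      |G n (V s ω) (fun i => V (s.succAbove i) ω) - T (V s ω)|) * Cb := by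
      rw [hd, abs_mul, abs_of_nonneg (by positivity), mul_assoc]
      refine mul_le_mul_of_nonneg_left ?_ (by positivity)
      refine (Finset.abs_sum_le_sum_abs _ _).trans ?_
      rw [Finset.sum_mul]
      refine Finset.sum_le_sum fun s _ => ?_
      rw [abs_mul, abs_of_nonneg (hb0 _)]
      exact mul_le_mul_of_nonneg_left (hbC _) (abs_nonneg _)
    calc |en n ω - L| ≤ |en n ω - Sn n ω| + |Sn n ω - L| := abs_sub_le _ _ _
      _ ≤ _ := by gcongr
  have hSi : ∀ n, Integrable (fun ω => |Sn n ω - L|) μ := fun n =>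
    Integrable.of_bound
      (continuous_abs.measurable.comp ((hSnm n).sub_const L)).aestronglyMeasurable (8 * Cb + |L|)
      (Eventually.of_forall fun ω => by
        rw [Real.norm_eq_abs, abs_abs]
        exact (abs_sub _ _).trans (by gcongr; exact hSnb n ω))
  have hRi : ∀ n, Integrable (fun ω => ((n + 1 : ℕ) : ℝ)⁻¹ * (∑ s : Fin (n + 1),
      |G n (V s ω) (fun i => V (s.succAbove i) ω) - T (V s ω)|) * Cb) μ := fun n =>
    ((integrable_finsetSum _ fun s _ => hDi n s).const_mul _).mul_const _
  have hei : ∀ n, Integrable (fun ω => |en n ω - L|) μ := fun n =>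
    ((hRi n).add (hSi n)).mono'
      (continuous_abs.measurable.comp ((henm n).sub_const L)).aestronglyMeasurable
      (Eventually.of_forall fun ω => by
        rw [Real.norm_eq_abs, abs_abs]
        exact hpt n ω)
  have hle : ∀ n, ∫ ω, |en n ω - L| ∂μ ≤ Bn n * Cb + ∫ ω, |Sn n ω - L| ∂μ := fun n => by
    refine (integral_mono (hei n) ((hRi n).add (hSi n)) (hpt n)).trans ?_
    rw [integral_add' (hRi n) (hSi n)]
    gcongr
    rw [integral_mul_const, integral_const_mul, integral_finsetSum _ fun s _ => hDi n s]
    simp_rw [hBs]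
    rw [Finset.sum_const, Finset.card_univ, Fintype.card_fin, nsmul_eq_mul, ← mul_assoc,
      inv_mul_cancel₀ (by positivity), one_mul]
  have hlim : Tendsto (fun n => ∫ ω, |en n ω - L| ∂μ) atTop (𝓝 0) := by
    refine squeeze_zero (fun n => integral_nonneg fun ω => abs_nonneg _) hle ?_
    simpa using (hBn.mul_const Cb).add hS0
  refine tendstoInMeasure_of_tendsto_eLpNorm (p := 1) one_ne_zero
    (fun n => (henm n).aestronglyMeasurable) aestronglyMeasurable_const ?_
  have hconv : ∀ n, eLpNorm (en n - fun _ => L) 1 μ = ENNReal.ofReal (∫ ω, |en n ω - L| ∂μ) := by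
    intro n
    rw [eLpNorm_one_eq_lintegral_enorm, ofReal_integral_eq_lintegral_ofReal (hei n)
      (Eventually.of_forall fun ω => abs_nonneg _)]
    refine lintegral_congr fun ω => ?_
    simp [Real.enorm_eq_ofReal_abs]
  simp_rw [hconv]
  simpa using ENNReal.tendsto_ofReal hlim
end

lemma norm_weights_eq_wMeas {X : Type} [MeasurableSpace X] {n : ℕ} (c : ℕ → ℝ) (xs : ℕ → X)
    (s : Fin (n + 1)) :
    (∑ i ∈ Finset.range (n + 1), ENNReal.ofReal (c i))⁻¹ •
      ∑ i ∈ Finset.range (n + 1), ENNReal.ofReal (c i) • Measure.dirac (xs i) =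
    wMeas (c s) (xs s) (fun i => c (s.succAbove i)) (fun i => xs (s.succAbove i)) := by
  rw [Finset.sum_range (fun i => ENNReal.ofReal (c i)),
    Finset.sum_range (fun i => ENNReal.ofReal (c i) • Measure.dirac (xs i)),
    Fin.sum_univ_succAbove _ s, Fin.sum_univ_succAbove _ s]
  rfl

lemma kernel_arg1 {dY dZ : ℕ} (K : ℝ → ℝ) {h : ℝ} (hh : 0 < h) (w w' : Euc dY × Euc dZ) :
    K (Real.sqrt (‖(h⁻¹ • (w - w')).1‖ ^ 2 + ‖(h⁻¹ • (w - w')).2‖ ^ 2)) =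
      wYZ K h w.1 w'.1 w.2 w'.2 := by
  rw [wYZ]
  congr 1
  simp only [Prod.smul_fst, Prod.smul_snd, Prod.fst_sub, Prod.snd_sub, norm_smul, norm_inv,
    Real.norm_eq_abs, abs_of_pos hh, dist_eq_norm]
  rw [show (h⁻¹ * ‖w.1 - w'.1‖) ^ 2 + (h⁻¹ * ‖w.2 - w'.2‖) ^ 2 =
    (h⁻¹) ^ 2 * (‖w.1 - w'.1‖ ^ 2 + ‖w.2 - w'.2‖ ^ 2) by ring, Real.sqrt_mul (by positivity),
    Real.sqrt_sq (by positivity), div_eq_inv_mul]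

lemma kernel_arg2 {dZ : ℕ} (K : ℝ → ℝ) {h : ℝ} (hh : 0 < h) (w w' : Euc dZ) :
    K ‖h⁻¹ • (w - w')‖ = K (dist w w' / h) := by
  rw [norm_smul, norm_inv, Real.norm_eq_abs, abs_of_pos hh, dist_eq_norm, div_eq_inv_mul]

lemma law_fin {X W : Type} [MeasurableSpace X] [MeasurableSpace W] {ρ : Measure X} [SigmaFinite ρ]
    {lam : Measure W} [SigmaFinite lam] {f : X → W → ℝ}
    (hf : Measurable (fun u : X × W => f u.1 u.2))
    (hp : IsProbabilityMeasure ((ρ.prod lam).withDensity fun u => ENNReal.ofReal (f u.1 u.2))) :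
    ∫⁻ w, ∫⁻ x, ENNReal.ofReal (f x w) ∂ρ ∂lam ≠ ∞ := by
  have h2 : Measurable fun u : X × W => ENNReal.ofReal (f u.1 u.2) := hf.ennreal_ofReal
  have h := hp.measure_univ
  rw [withDensity_apply _ MeasurableSet.univ, Measure.restrict_univ, lintegral_prod_symm' _ h2] at h
  rw [h]
  simp

lemma law_XZ {X Y Z : Type} [MeasurableSpace X] [MeasurableSpace Y] [MeasurableSpace Z]
    {rX : Measure X} [SigmaFinite rX] {rY : Measure Y} [SigmaFinite rY]
    {rZ : Measure Z} [SigmaFinite rZ] {p : X → Y → Z → ℝ}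
    (hp : Measurable fun v : X × Y × Z => p v.1 v.2.1 v.2.2) (hp0 : ∀ x y z, 0 ≤ p x y z)
    (hprob : IsProbabilityMeasure ((rX.prod (rY.prod rZ)).withDensity
      fun v => ENNReal.ofReal (p v.1 v.2.1 v.2.2))) :
    ((rX.prod (rY.prod rZ)).withDensity fun v => ENNReal.ofReal (p v.1 v.2.1 v.2.2)).map
      (fun v => (v.1, v.2.2)) =
    (rX.prod rZ).withDensity fun u => ENNReal.ofReal (∫ y, p u.1 y u.2 ∂ rY) := by
  have h2 : Measurable fun v : X × Y × Z => ENNReal.ofReal (p v.1 v.2.1 v.2.2) := hp.ennreal_ofReal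
  have hpr : Measurable fun v : X × Y × Z => (v.1, v.2.2) := by fun_prop
  set g : X × Z → ℝ≥0∞ := fun u => ∫⁻ y, ENNReal.ofReal (p u.1 y u.2) ∂ rY with hg
  have h3 : Measurable fun q : (X × Z) × Y => ENNReal.ofReal (p q.1.1 q.2 q.1.2) :=
    h2.comp (by fun_prop : Measurable fun q : (X × Z) × Y => (q.1.1, q.2, q.1.2))
  have hgm : Measurable g := h3.lintegral_prod_right'
  have c1 : ((rX.prod (rY.prod rZ)).withDensity fun v => ENNReal.ofReal (p v.1 v.2.1 v.2.2)).map
      (fun v => (v.1, v.2.2)) = (rX.prod rZ).withDensity g := by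
    ext s hs
    have hs' : MeasurableSet ((fun v : X × Y × Z => (v.1, v.2.2)) ⁻¹' s) := hpr hs
    rw [Measure.map_apply hpr hs, withDensity_apply _ hs', withDensity_apply _ hs,
      ← lintegral_indicator hs', ← lintegral_indicator hs,
      lintegral_prod _ (h2.indicator hs').aemeasurable,
      lintegral_prod _ (hgm.indicator hs).aemeasurable]
    refine lintegral_congr fun x => ?_
    refine (lintegral_prod_symm' _ ((h2.indicator hs').comp measurable_prodMk_left)).trans ?_
    refine lintegral_congr fun z => ?_
    by_cases hz : (x, z) ∈ s
    · rw [Set.indicator_of_mem hz]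
      refine lintegral_congr fun y => ?_
      exact Set.indicator_of_mem (s := (fun v : X × Y × Z => (v.1, v.2.2)) ⁻¹' s)
        (a := (x, y, z)) hz _
    · rw [Set.indicator_of_notMem hz]
      rw [lintegral_eq_zero_of_ae_eq_zero]
      refine Eventually.of_forall fun y => ?_
      exact Set.indicator_of_notMem (s := (fun v : X × Y × Z => (v.1, v.2.2)) ⁻¹' s)
        (a := (x, y, z)) hz _
  rw [c1]
  refine withDensity_congr_ae ?_
  have hfin : ∫⁻ u, g u ∂(rX.prod rZ) ≠ ∞ := by
    have h := Measure.isProbabilityMeasure_map (μ := ((rX.prod (rY.prod rZ)).withDensity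
      fun v => ENNReal.ofReal (p v.1 v.2.1 v.2.2))) hpr.aemeasurable
    rw [c1] at h
    have := h.measure_univ
    rw [withDensity_apply _ MeasurableSet.univ, Measure.restrict_univ] at this
    rw [this]; simp
  filter_upwards [ae_lt_top hgm hfin] with u hu
  have hpm : Measurable fun y => p u.1 y u.2 :=
    hp.comp (by fun_prop : Measurable fun y : Y => (u.1, y, u.2))
  rw [ofReal_integral_eq_lintegral_ofReal _ (Eventually.of_forall fun y => hp0 _ _ _)]
  refine ⟨hpm.aestronglyMeasurable, ?_⟩
  rw [hasFiniteIntegral_iff_ofReal (Eventually.of_forall fun u => hp0 _ _ _)]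
  exact hu

/-- **Theorem 1, consistency.** Under (A1)-(A3), the kernel-averaged estimator
`ζ̂_{a,n} = n⁻¹ ∑_{s} Θ²(P̃_{X|Y_s,Z_s}, P̃_{X|Z_s}) a(Y_s, Z_s)` converges in probability to the
conditional ball divergence `ζ_a(X, Y | Z) = E[Θ²(P_{X|Y,Z}, P_{X|Z}) a(Y, Z)]`. -/
theorem condBallDiv_estimator_consistent
    {dX dY dZ : ℕ} {Ω : Type} [MeasurableSpace Ω]
    (μ : Measure Ω) [IsProbabilityMeasure μ]
    -- i.i.d. samples from the joint density `p`
    (Xs : ℕ → Ω → Euc dX) (Ys : ℕ → Ω → Euc dY) (Zs : ℕ → Ω → Euc dZ)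
    (hmeas : ∀ i, Measurable fun ω => (Xs i ω, Ys i ω, Zs i ω))
    (p : Euc dX → Euc dY → Euc dZ → ℝ)
    (hp_meas : Measurable fun v : Euc dX × Euc dY × Euc dZ => p v.1 v.2.1 v.2.2)
    (hp_nonneg : ∀ x y z, 0 ≤ p x y z)
    (hiid : iIndepFun (fun i ω => (Xs i ω, Ys i ω, Zs i ω)) μ)
    (hlaw : ∀ i, μ.map (fun ω => (Xs i ω, Ys i ω, Zs i ω))
      = volume.withDensity fun v => ENNReal.ofReal (p v.1 v.2.1 v.2.2))
    -- assumptions (A1), (A2), (A3)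
    (hA1 : A1 p)
    (K : ℝ → ℝ) (hK1 : KernelAssumption K (dY + dZ)) (hK2 : KernelAssumption K dZ)
    (h1 h2 : ℕ → ℝ) (hA3 : BandwidthAssumption dY dZ h1 h2)
    -- the weight function: bounded, measurable, nonnegative, positive on the support of `p_{Y,Z}`
    (a : Euc dY → Euc dZ → ℝ)
    (ha_meas : Measurable fun w : Euc dY × Euc dZ => a w.1 w.2)
    (ha_nonneg : ∀ y z, 0 ≤ a y z) (ha_bdd : ∃ C : ℝ, ∀ y z, a y z ≤ C)
    (ha_pos : ∀ y z, 0 < margYZ p y z → 0 < a y z) :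
    TendstoInMeasure μ
      (fun (n : ℕ) ω => (n : ℝ)⁻¹ * ∑ s ∈ Finset.range n,
        ballDiv
          (condEstYZ K (h1 n) n (fun i => Xs i ω) (fun i => Ys i ω) (fun i => Zs i ω)
            (Ys s ω) (Zs s ω))
          (condEstZ K (h2 n) n (fun i => Xs i ω) (fun i => Zs i ω) (Zs s ω))
          * a (Ys s ω) (Zs s ω))
      atTop
      (fun _ => ∫ y, ∫ z, ballDiv (condAtYZ p y z) (condAtZ p z) * a y z * margYZ p y z) := by
  obtain ⟨Ca, hCa⟩ := ha_bdd
  obtain ⟨-, -, C, -, hC1, -, -, -, -, hC2⟩ := hA1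
  obtain ⟨hh1, hh2, -, hn1, hn2, hs1, hs2⟩ := hA3
  obtain ⟨hK0, ⟨M, hKM⟩, -, ⟨R, hR, hKR⟩, hKi1, -⟩ := hK1
  obtain ⟨-, -, -, -, hKi2, -⟩ := hK2
  set V : ℕ → Ω → Euc dX × Euc dY × Euc dZ := fun i ω => (Xs i ω, Ys i ω, Zs i ω) with hVdef
  set ν : Measure (Euc dX × Euc dY × Euc dZ) :=
    volume.withDensity fun v => ENNReal.ofReal (p v.1 v.2.1 v.2.2) with hνdef
  have hνp : IsProbabilityMeasure ν := by
    rw [← hlaw 0]; exact Measure.isProbabilityMeasure_map (hmeas 0).aemeasurable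
  -- kernels
  obtain ⟨k1, k1m, k10, k1M, k1R, k1i, k1p, k1e, k1z⟩ := exists_meas_kernel
    (volume : Measure (Euc dY × Euc dZ)) (M := M) (R := R)
    (κ := fun u => K (Real.sqrt (‖u.1‖ ^ 2 + ‖u.2‖ ^ 2))) (fun u => hK0 _) (fun u => hKM _)
    (fun u hu => by
      apply hKR
      rw [abs_of_nonneg (Real.sqrt_nonneg _)]
      refine hu.trans_le ?_
      rw [Prod.norm_def]
      refine max_le ?_ ?_
      · exact Real.le_sqrt_of_sq_le (by nlinarith [sq_nonneg ‖u.2‖])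
      · exact Real.le_sqrt_of_sq_le (by nlinarith [sq_nonneg ‖u.1‖]))
    ((integral_euc_add dY dZ K).trans hKi1)
  obtain ⟨k2, k2m, k20, k2M, k2R, k2i, k2p, k2e, k2z⟩ := exists_meas_kernel
    (volume : Measure (Euc dZ)) (M := M) (R := R)
    (κ := fun u => K ‖u‖) (fun u => hK0 _) (fun u => hKM _)
    (fun u hu => by
      apply hKR
      rwa [abs_of_nonneg (norm_nonneg _)]) hKi2
  -- densities
  set f1 : Euc dX → Euc dY × Euc dZ → ℝ := fun x w => p x w.1 w.2 with hf1
  set f2 : Euc dX → Euc dZ → ℝ := fun x z => ∫ y, p x y z with hf2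
  have hf1m : Measurable fun u : Euc dX × (Euc dY × Euc dZ) => f1 u.1 u.2 := hp_meas
  have hf2m : Measurable fun u : Euc dX × Euc dZ => f2 u.1 u.2 := by
    have h3 : Measurable fun q : (Euc dX × Euc dZ) × Euc dY => p q.1.1 q.2 q.1.2 :=
      hp_meas.comp (by fun_prop :
        Measurable fun q : (Euc dX × Euc dZ) × Euc dY => (q.1.1, q.2, q.1.2))
    exact h3.stronglyMeasurable.integral_prod_right'.measurable
  have hν1 : ν.map (fun v => (v.1, v.2)) =
      ((volume : Measure (Euc dX)).prod (volume : Measure (Euc dY × Euc dZ))).withDensity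
        fun u => ENNReal.ofReal (f1 u.1 u.2) := Measure.map_id
  have hν2 : ν.map (fun v => (v.1, v.2.2)) =
      ((volume : Measure (Euc dX)).prod (volume : Measure (Euc dZ))).withDensity
        fun u => ENNReal.ofReal (f2 u.1 u.2) := law_XZ hp_meas hp_nonneg hνp
  have H1 : EstHyp volume volume ν (fun v => v.1) (fun v => v.2) k1 (fun n => h1 (n + 1)) f1 :=
    { hk := k1m
      hk0 := k10
      hkM := ⟨M, k1M⟩
      hkR := ⟨R, hR, k1R⟩
      hki := k1i
      hkpos := k1p
      hh := fun n => hh1 _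
      hlim := (tendsto_add_atTop_iff_nat 1).2 (bandwidth_tendsto_zero hh1 hn1 hs1)
      hnh := by
        have := bandwidth_shift hh1 hn1
        simpa [Module.finrank_prod] using this
      hfX := measurable_fst
      hfW := measurable_snd
      hf := hf1m
      hf0 := fun x w => hp_nonneg _ _ _
      hfin := law_fin hf1m (by
        rw [← hν1]; exact Measure.isProbabilityMeasure_map (by fun_prop))
      hC := ⟨C, fun w => hC1 _ _⟩
      hν := hν1 }
  have H2 : EstHyp volume volume ν (fun v => v.1) (fun v => v.2.2) k2 (fun n => h2 (n + 1)) f2 :=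
    { hk := k2m
      hk0 := k20
      hkM := ⟨M, k2M⟩
      hkR := ⟨R, hR, k2R⟩
      hki := k2i
      hkpos := k2p
      hh := fun n => hh2 _
      hlim := (tendsto_add_atTop_iff_nat 1).2 (bandwidth_tendsto_zero hh2 hn2 hs2)
      hnh := by
        have := bandwidth_shift hh2 hn2
        simpa using this
      hfX := measurable_fst
      hfW := measurable_snd.comp measurable_snd
      hf := hf2m
      hf0 := fun x w => integral_nonneg fun y => hp_nonneg _ _ _
      hfin := law_fin hf2m (by
        rw [← hν2]; exact Measure.isProbabilityMeasure_map (by fun_prop))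
      hC := ⟨C, fun w => hC2 _⟩
      hν := hν2 }
  have hHaar : (volume : Measure (Euc dY × Euc dZ)).IsAddHaarMeasure := by
    rw [Measure.volume_eq_prod]; infer_instance
  have main := abstract_consistency H1 H2 (μ := μ) (V := V) hmeas hiid hlaw
    (b := fun v => a v.2.1 v.2.2) (ha_meas.comp measurable_snd) (fun v => ha_nonneg _ _)
    (Cb := Ca) (fun v => hCa _ _)
  -- the limit
  have hlimit : ∫ v, Tm f1 f2 (fun v : Euc dX × Euc dY × Euc dZ => v.2) (fun v => v.2.2) v
      * a v.2.1 v.2.2 ∂ν =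
      ∫ y, ∫ z, ballDiv (condAtYZ p y z) (condAtZ p z) * a y z * margYZ p y z := by
    set φ : Euc dY × Euc dZ → ℝ := fun w =>
      ballDiv (condAtYZ p w.1 w.2) (condAtZ p w.2) * a w.1 w.2 with hφ
    have hφm : Measurable φ := by
      refine Measurable.mul ?_ ha_meas
      exact measurable_ballDiv (P := fun w : Euc dY × Euc dZ => cD volume f1 w)
        (Q := fun w : Euc dY × Euc dZ => cD volume f2 w.2) (measurable_cD H1.hf)
        ((measurable_cD H2.hf).comp measurable_snd)
        (fun _ => cD_univ_le H1.hf H1.hf0 _) (fun _ => cD_univ_le H2.hf H2.hf0 _)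
    have hφb : ∀ w, |φ w| ≤ 8 * Ca := fun w => by
      simp only [hφ]
      rw [abs_mul, abs_of_nonneg (ha_nonneg _ _)]
      refine mul_le_mul ?_ (hCa _ _) (ha_nonneg _ _) (by norm_num)
      exact abs_ballDiv_le _ _ (cD_univ_le H1.hf H1.hf0 w) (cD_univ_le H2.hf H2.hf0 w.2)
    have e := mD_law H1.hfX H1.hfW H1.hf H1.hf0 H1.hfin H1.hν (A := Set.univ) MeasurableSet.univ
      hφm ⟨_, hφb⟩
    have hi : Integrable (fun w => φ w * mD volume f1 Set.univ w) volume :=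
      (mD_integrable H1.hf H1.hfin Set.univ).bdd_mul (c := 8 * Ca) hφm.aestronglyMeasurable
        (Eventually.of_forall hφb)
    rw [Measure.volume_eq_prod, integral_prod _ hi] at e
    simp only [mD_univ H1.hf H1.hf0, Set.indicator_univ, Pi.one_apply, mul_one] at e
    exact e
  rw [hlimit] at main
  -- replace the estimator
  have hac1 : ν.map (fun v => v.2) ≪ volume := fW_ac H1.hfX H1.hfW H1.hν
  have hac2 : ν.map (fun v => v.2.2) ≪ volume := fW_ac H2.hfX H2.hfW H2.hν
  have hagree : ∀ n : ℕ, ∀ᵐ ω ∂μ, ∀ s : Fin (n + 1), ∀ i : Fin n,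
      k1 ((h1 (n + 1))⁻¹ • ((V s ω).2 - (V (s.succAbove i) ω).2)) =
        wYZ K (h1 (n + 1)) (Ys s ω) (Ys (s.succAbove i) ω) (Zs s ω) (Zs (s.succAbove i) ω) ∧
      k2 ((h2 (n + 1))⁻¹ • ((V s ω).2.2 - (V (s.succAbove i) ω).2.2)) =
        K (dist (Zs s ω) (Zs (s.succAbove i) ω) / h2 (n + 1)) := by
    intro n
    rw [ae_all_iff]
    intro s
    rw [ae_all_iff]
    intro i
    have hne : (s : ℕ) ≠ (s.succAbove i : Fin (n + 1)) := fun h =>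
      (Fin.succAbove_ne s i) (Fin.ext h.symm)
    have hin := hiid.indepFun hne
    have lawW1 : ∀ j, μ.map (fun ω => (V j ω).2) ≪ volume := fun j => by
      have : μ.map (fun ω => (V j ω).2) = ν.map (fun v => v.2) := by
        rw [← hlaw j, Measure.map_map measurable_snd (hmeas j)]; rfl
      rw [this]; exact hac1
    have lawW2 : ∀ j, μ.map (fun ω => (V j ω).2.2) ≪ volume := fun j => by
      have : μ.map (fun ω => (V j ω).2.2) = ν.map (fun v => v.2.2) := by
        have hm : Measurable fun v : Euc dX × Euc dY × Euc dZ => v.2.2 := by fun_prop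
        rw [← hlaw j, Measure.map_map hm (hmeas j)]; rfl
      rw [this]; exact hac2
    have q1 := ae_diff_of_indep (μ := μ) (volume : Measure (Euc dY × Euc dZ))
      (U1 := fun ω => (V s ω).2) (U2 := fun ω => (V (s.succAbove i) ω).2)
      (measurable_snd.comp (hmeas _)) (measurable_snd.comp (hmeas _))
      (hin.comp measurable_snd measurable_snd) (lawW1 _) (lawW1 _) k1e
      (inv_ne_zero (hh1 (n + 1)).ne')
    have q2 := ae_diff_of_indep (μ := μ) (volume : Measure (Euc dZ))
      (U1 := fun ω => (V s ω).2.2) (U2 := fun ω => (V (s.succAbove i) ω).2.2)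
      (measurable_snd.comp (measurable_snd.comp (hmeas _)))
      (measurable_snd.comp (measurable_snd.comp (hmeas _)))
      (hin.comp (measurable_snd.comp measurable_snd) (measurable_snd.comp measurable_snd))
      (lawW2 _) (lawW2 _) k2e (inv_ne_zero (hh2 (n + 1)).ne')
    filter_upwards [q1, q2] with ω hω1 hω2
    exact ⟨hω1.trans (kernel_arg1 K (hh1 _) _ _), hω2.trans (kernel_arg2 K (hh2 _) _ _)⟩
  intro ε hε
  refine (tendsto_add_atTop_iff_nat 1).1 ?_
  refine (TendstoInMeasure.congr' (f' := fun (n : ℕ) ω => ((n + 1 : ℕ) : ℝ)⁻¹ *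
        ∑ s ∈ Finset.range (n + 1),
        ballDiv
          (condEstYZ K (h1 (n + 1)) (n + 1) (fun i => Xs i ω) (fun i => Ys i ω) (fun i => Zs i ω)
            (Ys s ω) (Zs s ω))
          (condEstZ K (h2 (n + 1)) (n + 1) (fun i => Xs i ω) (fun i => Zs i ω) (Zs s ω))
          * a (Ys s ω) (Zs s ω)) (Eventually.of_forall fun n => ?_) (ae_eq_refl _) main) ε hε
  filter_upwards [hagree n] with ω hω
  congr 1
  rw [Finset.sum_range]
  refine Finset.sum_congr rfl fun s _ => ?_
  have E1 : condEstYZ K (h1 (n + 1)) (n + 1) (fun i => Xs i ω) (fun i => Ys i ω)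
      (fun i => Zs i ω) (Ys s ω) (Zs s ω) = wMeas (k1 0) (V s ω).1
        (fun i => k1 ((h1 (n + 1))⁻¹ • ((V s ω).2 - (V (s.succAbove i) ω).2)))
        (fun i => (V (s.succAbove i) ω).1) := by
    rw [condEstYZ, norm_weights_eq_wMeas
      (fun i => wYZ K (h1 (n + 1)) (Ys s ω) (Ys i ω) (Zs s ω) (Zs i ω)) (fun i => Xs i ω) s]
    have : wYZ K (h1 (n + 1)) (Ys s ω) (Ys s ω) (Zs s ω) (Zs s ω) = k1 0 := by
      rw [k1z]; simp [wYZ]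
    simp only [this, fun i => (hω s i).1]
    rfl
  have E2 : condEstZ K (h2 (n + 1)) (n + 1) (fun i => Xs i ω)
      (fun i => Zs i ω) (Zs s ω) = wMeas (k2 0) (V s ω).1
        (fun i => k2 ((h2 (n + 1))⁻¹ • ((V s ω).2.2 - (V (s.succAbove i) ω).2.2)))
        (fun i => (V (s.succAbove i) ω).1) := by
    rw [condEstZ, norm_weights_eq_wMeas
      (fun i => K (dist (Zs s ω) (Zs i ω) / h2 (n + 1))) (fun i => Xs i ω) s]
    have : K (dist (Zs s ω) (Zs s ω) / h2 (n + 1)) = k2 0 := by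
      rw [k2z]; simp
    simp only [this, fun i => (hω s i).2]
    rfl
  rw [E1, E2]
  rfl

end
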